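/- For every interval D ⊆ [0,1] and every L ∈ ℝ, the Lebesgue measure of the set {x ∈ D : log q_min(x,δ) > L − (1/2)·log δ} converges, as δ → 0⁺, to Leb(D)·∫_L^∞ η_log(s) ds. -/

import Mathlib

open MeasureTheory Filter

/-- The limiting density of the logarithm of smallest denominators. -/
noncomputable def etaLog (s : ℝ) : ℝ :=
  if s ≤ 0 then 6 / Real.pi ^ 2 * Real.exp (2 * s)
  else if s ≤ Real.log 2 then 6 / Real.pi ^ 2 * (-Real.exp (2 * s) + 2 + 4 * s)
  else 6 / Real.pi ^ 2 * (-Real.exp (2 * s) + 2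
    + 2 * Real.exp (2 * s) * Real.sqrt (1 / 4 - Real.exp (-2 * s))
    - 4 * Real.log (1 / 2 + Real.sqrt (1 / 4 - Real.exp (-2 * s))))

/-- The smallest denominator of all rationals in the interval `(x - δ/2, x + δ/2)`. -/
noncomputable def qmin (x δ : ℝ) : ℕ :=
  sInf {q : ℕ | 0 < q ∧ ∃ p : ℤ, x - δ / 2 < (p : ℝ) / q ∧ (p : ℝ) / q < x + δ / 2}

/-!
For `x` in the unit interval, `N < qmin x δ` says that `x` is at distance at least `δ / 2` from
every fraction of denominator at most `N`. Such `x` form the middle parts of the Farey gaps of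
order `N`, one for each coprime pair of neighbouring denominators `(a, b)` with `a, b ≤ N < a + b`,
of length `max 0 (1 / (a b) - δ)`.

With `δ = c / N²` the total length of these pieces is, up to the density `6 / π²` of coprime pairs,
a Riemann sum over the triangle `u, v ≤ 1 < u + v`, and its limit is the tail of `etaLog`. The
pieces are equidistributed because the left endpoint of the gap of `(a, b)` is determined modulo
one by the inverse of `b` modulo `a`: its exponential sums are incomplete Kloosterman sums, for
which any power saving over the trivial bound suffices. Weyl's criterion then gives the limit on
every measurable set.
-/

namespace SmallestDenominator

open scoped Topology

/-! ### Divisors -/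

lemma add_one_le_mul_pow {r : ℝ} (hr : 1 < r) (v : ℕ) : (v : ℝ) + 1 ≤ r / (r - 1) * r ^ v := by
  have hr' : 0 < r - 1 := sub_pos.2 hr
  have bernoulli : 1 + (v : ℝ) * (r - 1) ≤ r ^ v :=
    one_add_mul_sub_le_pow (by linarith) v
  calc (v : ℝ) + 1 ≤ r / (r - 1) * (1 + v * (r - 1)) := by
        rw [div_mul_eq_mul_div, le_div_iff₀ hr']
        nlinarith [mul_nonneg v.cast_nonneg (sq_nonneg (r - 1))]
    _ ≤ r / (r - 1) * r ^ v := by gcongr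

lemma exists_card_divisors_le_rpow {ε : ℝ} (hε : 0 < ε) :
    ∃ C : ℝ, 0 < C ∧ ∀ n : ℕ, n ≠ 0 → (n.divisors.card : ℝ) ≤ C * (n : ℝ) ^ ε := by
  set r : ℝ := 2 ^ ε with hr
  have r_gt_one : 1 < r := Real.one_lt_rpow one_lt_two hε
  set K : ℝ := r / (r - 1)
  have one_le_K : 1 ≤ K := (one_le_div₀ (sub_pos.2 r_gt_one)).2 (by linarith)
  set N : ℕ := ⌈(2 : ℝ) ^ ε⁻¹⌉₊
  have factor_le : ∀ p : ℕ, 2 ≤ p → ∀ v : ℕ,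
      (v : ℝ) + 1 ≤ (if p < N then K else 1) * ((p : ℝ) ^ ε) ^ v := by
    intro p hp v
    split_ifs with hpN
    · refine (add_one_le_mul_pow r_gt_one v).trans ?_
      have : r ≤ (p : ℝ) ^ ε := by rw [hr]; gcongr; exact_mod_cast hp
      gcongr
    · have two_le : 2 ≤ (p : ℝ) ^ ε := by
        rw [← Real.rpow_inv_le_iff_of_pos zero_le_two p.cast_nonneg hε]
        exact (Nat.le_ceil _).trans (by exact_mod_cast not_lt.1 hpN)
      calc (v : ℝ) + 1 ≤ 2 ^ v := by exact_mod_cast Nat.lt_two_pow_self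
        _ ≤ 1 * ((p : ℝ) ^ ε) ^ v := by rw [one_mul]; gcongr
  refine ⟨K ^ N, by positivity, fun n hn ↦ ?_⟩
  have rpow_eq : (n : ℝ) ^ ε = ∏ p ∈ n.primeFactors, ((p : ℝ) ^ ε) ^ n.factorization p := by
    conv_lhs => rw [← Nat.prod_factorization_pow_eq_self hn]
    rw [Finsupp.prod, Nat.cast_prod, ← Real.finsetProd_rpow _ _ fun p _ ↦ by positivity]
    exact Finset.prod_congr rfl fun p _ ↦ by
      rw [Nat.cast_pow, ← Real.rpow_pow_comm p.cast_nonneg]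
  rw [Nat.card_divisors hn, rpow_eq]
  push_cast
  calc ∏ p ∈ n.primeFactors, ((n.factorization p : ℝ) + 1)
      ≤ ∏ p ∈ n.primeFactors, (if p < N then K else 1) * ((p : ℝ) ^ ε) ^ n.factorization p :=
        Finset.prod_le_prod (fun p _ ↦ by positivity) fun p hp ↦
          factor_le p (Nat.prime_of_mem_primeFactors hp).two_le _
    _ = K ^ (n.primeFactors.filter (· < N)).card *
          ∏ p ∈ n.primeFactors, ((p : ℝ) ^ ε) ^ n.factorization p := by
        rw [Finset.prod_mul_distrib, ← Finset.prod_filter, Finset.prod_const]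
    _ ≤ K ^ N * ∏ p ∈ n.primeFactors, ((p : ℝ) ^ ε) ^ n.factorization p := by
        gcongr
        calc _ ≤ (Finset.range N).card := Finset.card_le_card fun p hp ↦
              Finset.mem_range.2 (Finset.mem_filter.1 hp).2
          _ = N := Finset.card_range N

lemma le_card_divisors_mul_totient (n : ℕ) : n ≤ n.divisors.card * n.totient := by
  rcases n.eq_zero_or_pos with rfl | hn
  · exact Nat.zero_le _
  calc n = ∑ d ∈ n.divisors, d.totient := n.sum_totient.symm
    _ ≤ ∑ _d ∈ n.divisors, n.totient := Finset.sum_le_sum fun d hd ↦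
        Nat.le_of_dvd (Nat.totient_pos.2 hn)
          (Nat.totient_dvd_of_dvd (Nat.dvd_of_mem_divisors hd))
    _ = n.divisors.card * n.totient := Finset.sum_const_nat fun _ _ ↦ rfl

/-! ### Kloosterman sums -/

section KloostermanSum

variable {R : Type*} [CommRing R] [Fintype R] [DecidableEq R] (ψ : AddChar R ℂ)

/-- The Kloosterman sum attached to an additive character `ψ` of a finite commutative ring, the
source of cancellation in sums over Farey fractions. -/
noncomputable def kloostermanSum (m k : R) : ℂ :=
  ∑ x : Rˣ, ψ (m * x + k * ↑x⁻¹)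

lemma kloostermanSum_mul_units (m k : R) (t : Rˣ) :
    kloostermanSum ψ (m * t) (k * ↑t⁻¹) = kloostermanSum ψ m k := by
  refine Fintype.sum_equiv (Equiv.mulLeft t) _ _ fun x ↦ congrArg ψ ?_
  simp only [Equiv.coe_mulLeft, mul_inv_rev, Units.val_mul]
  ring

/-- The quadruples of units entering the fourth moment of Kloosterman sums: solutions
`((a, b), (c, d))` of `a + b = c + d` and `a⁻¹ + b⁻¹ = c⁻¹ + d⁻¹`. -/
def fourthMomentSolutions (R : Type*) [CommRing R] [Fintype R] [DecidableEq R] :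
    Finset ((Rˣ × Rˣ) × (Rˣ × Rˣ)) :=
  {x | (x.1.1 + x.1.2 - (x.2.1 + x.2.2) : R) = 0 ∧
    (↑x.1.1⁻¹ + ↑x.1.2⁻¹ - (↑x.2.1⁻¹ + ↑x.2.2⁻¹) : R) = 0}

lemma norm_kloostermanSum_pow_four (m k : R) :
    ((‖kloostermanSum ψ m k‖ ^ 4 : ℝ) : ℂ) = ∑ x : (Rˣ × Rˣ) × (Rˣ × Rˣ),
      ψ (m * (x.1.1 + x.1.2 - (x.2.1 + x.2.2))) *
        ψ (k * (↑x.1.1⁻¹ + ↑x.1.2⁻¹ - (↑x.2.1⁻¹ + ↑x.2.2⁻¹))) := by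
  have norm_eq : ((‖kloostermanSum ψ m k‖ ^ 4 : ℝ) : ℂ) =
      (kloostermanSum ψ m k * kloostermanSum ψ m k) *
        (starRingEnd ℂ (kloostermanSum ψ m k) * starRingEnd ℂ (kloostermanSum ψ m k)) := by
    rw [mul_mul_mul_comm, Complex.mul_conj', Complex.ofReal_pow]
    ring
  rw [norm_eq]
  simp only [kloostermanSum, map_sum, ← AddChar.map_neg_eq_conj]
  rw [Fintype.sum_mul_sum, Fintype.sum_mul_sum, ← Fintype.sum_prod_type',
    ← Fintype.sum_prod_type', Fintype.sum_mul_sum, ← Fintype.sum_prod_type']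
  refine Finset.sum_congr rfl fun x _ ↦ ?_
  simp only [← AddChar.map_add_eq_mul]
  congr 1
  ring

variable {ψ} in
lemma sum_norm_kloostermanSum_pow_four (hψ : ψ.IsPrimitive) :
    ∑ k : R, ∑ m : R, ‖kloostermanSum ψ m k‖ ^ 4 =
      (Fintype.card R : ℝ) ^ 2 * (fourthMomentSolutions R).card := by
  apply Complex.ofReal_injective
  simp_rw [Complex.ofReal_sum, norm_kloostermanSum_pow_four]
  rw [Finset.sum_congr rfl fun k _ ↦ Finset.sum_comm, Finset.sum_comm]
  simp_rw [← Finset.sum_mul, AddChar.sum_mulShift _ hψ, ← Finset.mul_sum,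
    AddChar.sum_mulShift _ hψ, fourthMomentSolutions, Finset.card_filter]
  push_cast
  rw [Finset.mul_sum]
  refine Finset.sum_congr rfl fun x _ ↦ ?_
  split_ifs <;> simp_all [sq]

omit [Fintype R] [DecidableEq R] in
lemma mul_sub_mul_sub_eq_zero {a b c d : Rˣ} (hadd : (a + b - (c + d) : R) = 0)
    (hinv : (↑a⁻¹ + ↑b⁻¹ - (↑c⁻¹ + ↑d⁻¹) : R) = 0) :
    ((a : R) + b) * (c - a) * (c - b) = 0 := by
  have clear_denominators : ((a : R) + b) * (c * d) = (c + d) * (a * b) := by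
    linear_combination (a * b * c * d : R) * hinv - (b * c * d : R) * a.mul_inv
      - (a * c * d : R) * b.mul_inv + (a * b * d : R) * c.mul_inv + (a * b * c : R) * d.mul_inv
  linear_combination (-1 : R) * clear_denominators + (a * b - c * (a + b) : R) * hadd

omit [CommRing R] in
lemma card_filter_fst_mem_le {α : Type*} [Fintype α] (S : Finset R) {e : α → R × R × R}
    (he : Function.Injective e) :
    ({x | (e x).1 ∈ S} : Finset α).card ≤ S.card * Fintype.card R ^ 2 := by
  calc _ ≤ (S ×ˢ (Finset.univ : Finset (R × R))).card :=
        Finset.card_le_card_of_injOn e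
          (fun x hx ↦ by simpa using hx) he.injOn
    _ = S.card * Fintype.card R ^ 2 := by
        rw [Finset.card_product, Finset.card_univ, Fintype.card_prod, sq]

/-- If every vanishing product of three elements has a factor in `S`, then `S` controls the number
of solutions, because these satisfy `(a + b) (c - a) (c - b) = 0`. -/
lemma card_fourthMomentSolutions_le (S : Finset R)
    (hS : ∀ u v w : R, u * v * w = 0 → u ∈ S ∨ v ∈ S ∨ w ∈ S) :
    (fourthMomentSolutions R).card ≤ 3 * (S.card * Fintype.card R ^ 2) := by
  have card_le : (fourthMomentSolutions R).card ≤ ({t : R × R × R |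
      t.1 + t.2.1 ∈ S ∨ t.2.2 - t.1 ∈ S ∨ t.2.2 - t.2.1 ∈ S} : Finset _).card := by
    refine Finset.card_le_card_of_injOn (fun x ↦ (x.1.1, x.1.2, x.2.1)) ?_ ?_
    · rintro ⟨⟨a, b⟩, ⟨c, d⟩⟩ hx
      simp only [fourthMomentSolutions, Finset.coe_filter_univ, Set.mem_ofPred_eq] at hx ⊢
      exact hS _ _ _ (mul_sub_mul_sub_eq_zero hx.1 hx.2)
    · rintro ⟨⟨a, b⟩, ⟨c, d⟩⟩ hx ⟨⟨a', b'⟩, ⟨c', d'⟩⟩ hy hxy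
      simp only [fourthMomentSolutions, Finset.coe_filter_univ, Set.mem_ofPred_eq,
        Prod.mk.injEq, Units.val_inj] at hx hy hxy ⊢
      obtain ⟨rfl, rfl, rfl⟩ := hxy
      exact ⟨⟨rfl, rfl⟩, rfl, Units.ext (by linear_combination hy.1 - hx.1)⟩
  have card_add := card_filter_fst_mem_le S (e := fun t : R × R × R ↦ (t.1 + t.2.1, t.2))
    fun s t h ↦ by grind
  have card_sub := card_filter_fst_mem_le S (e := fun t : R × R × R ↦ (t.2.2 - t.1, t.2))
    fun s t h ↦ by grind
  have card_sub' := card_filter_fst_mem_le S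
    (e := fun t : R × R × R ↦ (t.2.2 - t.2.1, t.1, t.2.2))
    fun s t h ↦ by grind
  rw [Finset.filter_or, Finset.filter_or] at card_le
  grind [Finset.card_union_le]

end KloostermanSum

/-- The residues sharing with `q` a divisor of size at least `q ^ (1 / 3)`. -/
def largeGcd (q : ℕ) [NeZero q] : Finset (ZMod q) :=
  {u | q ≤ q.gcd u.val ^ 3}

section ZMod

variable {q : ℕ} [NeZero q]

lemma mem_largeGcd_of_mul_mul_eq_zero (u v w : ZMod q) (h : u * v * w = 0) :
    u ∈ largeGcd q ∨ v ∈ largeGcd q ∨ w ∈ largeGcd q := by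
  have dvd_mul : q ∣ u.val * v.val * w.val := by
    rw [← ZMod.natCast_eq_zero_iff]
    simpa only [Nat.cast_mul, ZMod.natCast_val, ZMod.cast_id', id_eq] using h
  have dvd_gcd : q ∣ q.gcd u.val * q.gcd v.val * q.gcd w.val := by
    calc q = q.gcd (u.val * v.val * w.val) := (Nat.gcd_eq_left dvd_mul).symm
      _ ∣ q.gcd (u.val * v.val) * q.gcd w.val := Nat.gcd_mul_right_dvd_mul_gcd ..
      _ ∣ _ := Nat.mul_dvd_mul_right (Nat.gcd_mul_right_dvd_mul_gcd ..) _
  have gcd_pos : ∀ x : ZMod q, 0 < q.gcd x.val := fun x ↦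
    Nat.gcd_pos_of_pos_left _ (NeZero.pos q)
  have le_mul := Nat.le_of_dvd (mul_pos (mul_pos (gcd_pos u) (gcd_pos v)) (gcd_pos w)) dvd_gcd
  by_contra! hlt
  simp only [largeGcd, Finset.mem_filter, Finset.mem_univ, true_and, not_le] at hlt
  have : q ^ 3 < q ^ 3 := by
    calc q ^ 3 ≤ (q.gcd u.val * q.gcd v.val * q.gcd w.val) ^ 3 := Nat.pow_le_pow_left le_mul 3
      _ = q.gcd u.val ^ 3 * q.gcd v.val ^ 3 * q.gcd w.val ^ 3 := by rw [mul_pow, mul_pow]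
      _ < q * q * q := by gcongr; exacts [hlt.1, hlt.2.1, hlt.2.2]
      _ = q ^ 3 := by ring
  exact this.false

lemma card_filter_gcd_val_eq {d : ℕ} (hd : d ∣ q) :
    ({u : ZMod q | q.gcd u.val = d} : Finset _).card = (q / d).totient := by
  rw [Nat.totient_div_of_dvd hd]
  refine Finset.card_nbij' ZMod.val (fun j ↦ (j : ZMod q)) ?_ ?_ ?_ ?_
  · intro u hu
    simpa [ZMod.val_lt] using hu
  · intro j hj
    simp only [Finset.coe_filter, Finset.mem_range, Set.mem_ofPred_eq] at hj
    simpa [ZMod.val_cast_of_lt hj.1] using hj.2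
  · exact fun u _ ↦ ZMod.natCast_zmod_val u
  · intro j hj
    simp only [Finset.coe_filter, Finset.mem_range, Set.mem_ofPred_eq] at hj
    exact ZMod.val_cast_of_lt hj.1

lemma card_largeGcd_le :
    ((largeGcd q).card : ℝ) ≤ q.divisors.card * (q : ℝ) ^ (2 / 3 : ℝ) := by
  have codivisor_le : ∀ d ∈ q.divisors.filter (q ≤ · ^ 3),
      ((q / d : ℕ) : ℝ) ≤ (q : ℝ) ^ (2 / 3 : ℝ) := by
    intro d hd
    simp only [Finset.mem_filter, Nat.mem_divisors] at hd
    obtain ⟨⟨hdq, -⟩, hd3⟩ := hd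
    have pow_le : (q / d) ^ 3 ≤ q ^ 2 := by
      refine Nat.le_of_mul_le_mul_left ?_ (NeZero.pos q)
      calc q * (q / d) ^ 3 ≤ d ^ 3 * (q / d) ^ 3 := by gcongr
        _ = q * q ^ 2 := by rw [← mul_pow, Nat.mul_div_cancel' hdq]; ring
    rw [div_eq_mul_inv, Real.rpow_mul q.cast_nonneg,
      Real.le_rpow_inv_iff_of_pos (by positivity) (by positivity) three_pos]
    exact_mod_cast pow_le
  have card_fiber_le : ∀ d ∈ q.divisors.filter (q ≤ · ^ 3),
      (({u ∈ largeGcd q | q.gcd u.val = d} : Finset _).card : ℝ) ≤ (q : ℝ) ^ (2 / 3 : ℝ) := by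
    intro d hd
    refine le_trans (Nat.cast_le.2 ?_) (codivisor_le d hd)
    calc _ ≤ ({u : ZMod q | q.gcd u.val = d} : Finset _).card :=
          Finset.card_le_card (Finset.filter_subset_filter _ (Finset.subset_univ _))
      _ = (q / d).totient :=
          card_filter_gcd_val_eq (Nat.dvd_of_mem_divisors (Finset.mem_filter.1 hd).1)
      _ ≤ q / d := Nat.totient_le _
  rw [Finset.card_eq_sum_card_fiberwise (f := fun u : ZMod q ↦ q.gcd u.val)
    (t := q.divisors.filter (q ≤ · ^ 3)) fun u hu ↦ by
      simpa [largeGcd, Nat.gcd_dvd_left, NeZero.ne q] using hu]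
  calc ((∑ d ∈ q.divisors.filter (q ≤ · ^ 3),
        ({u ∈ largeGcd q | q.gcd u.val = d} : Finset _).card : ℕ) : ℝ)
      ≤ (q.divisors.filter (q ≤ · ^ 3)).card • (q : ℝ) ^ (2 / 3 : ℝ) := by
        rw [Nat.cast_sum]
        exact Finset.sum_le_card_nsmul _ _ _ card_fiber_le
    _ ≤ q.divisors.card * (q : ℝ) ^ (2 / 3 : ℝ) := by
        rw [nsmul_eq_mul]
        gcongr
        exact Finset.filter_subset _ _

lemma card_zsmul_eq_le {G : Type*} [AddCommGroup G] [IsAddCyclic G] [Fintype G] [DecidableEq G]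
    {k : ℤ} (hk : k ≠ 0) (c : G) : ({y : G | k • y = c} : Finset G).card ≤ k.natAbs := by
  by_cases hc : c ∈ Set.range (zsmulAddGroupHom k : G →+ G)
  · have card_eq := AddMonoidHom.card_fiber_eq_of_mem_range (zsmulAddGroupHom k : G →+ G) hc
      ⟨0, map_zero _⟩
    simp only [zsmulAddGroupHom_apply, ← natAbs_nsmul_eq_zero (n := k)] at card_eq
    exact card_eq.trans_le (IsAddCyclic.card_nsmul_eq_zero_le (Int.natAbs_pos.2 hk))
  · rw [Finset.filter_false_of_mem fun y _ (hy : k • y = c) ↦ hc ⟨y, hy⟩, Finset.card_empty]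
    exact Nat.zero_le _

lemma sum_intCast_mul_units_inv_le {k : ℤ} (hk : k ≠ 0) {F : ZMod q → ℝ} (hF : ∀ l, 0 ≤ F l) :
    ∑ t : (ZMod q)ˣ, F ((k : ZMod q) * (↑t⁻¹ : ZMod q)) ≤ k.natAbs * ∑ l, F l := by
  calc ∑ t : (ZMod q)ˣ, F ((k : ZMod q) * (↑t⁻¹ : ZMod q))
      = ∑ t : (ZMod q)ˣ, F (k • (t : ZMod q)) := by
        simp_rw [zsmul_eq_mul]
        exact Equiv.sum_comp (Equiv.inv (ZMod q)ˣ) fun t : (ZMod q)ˣ ↦ F ((k : ZMod q) * t)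
    _ = ∑ y ∈ Finset.univ.map ⟨Units.val, Units.val_injective⟩, F (k • y) := by
        rw [Finset.sum_map]
        rfl
    _ ≤ ∑ y, F (k • y) :=
        Finset.sum_le_sum_of_subset_of_nonneg (Finset.subset_univ _) fun _ _ _ ↦ hF _
    _ = ∑ l, ({y : ZMod q | k • y = l} : Finset _).card • F l := by
        simp_rw [← Finset.sum_const]
        exact (Finset.sum_fiberwise' _ _ _).symm
    _ ≤ ∑ l, k.natAbs • F l := Finset.sum_le_sum fun l _ ↦
        nsmul_le_nsmul_left (hF l) (card_zsmul_eq_le hk l)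
    _ = k.natAbs * ∑ l, F l := by rw [← Finset.smul_sum, nsmul_eq_mul]

/-- Averaging over `m ↦ m t`, `k ↦ k t⁻¹` bounds one Kloosterman sum by the full fourth moment. -/
lemma totient_mul_norm_kloostermanSum_pow_four_le {k : ℤ} (hk : k ≠ 0) (m : ZMod q) :
    (q.totient : ℝ) * ‖kloostermanSum ZMod.stdAddChar m (k : ZMod q)‖ ^ 4 ≤
      k.natAbs * ((q : ℝ) ^ 2 * (3 * ((largeGcd q).card * (q : ℝ) ^ 2))) := by
  have moment_le : ∑ l : ZMod q, ∑ m : ZMod q, ‖kloostermanSum ZMod.stdAddChar m l‖ ^ 4 ≤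
      (q : ℝ) ^ 2 * (3 * ((largeGcd q).card * (q : ℝ) ^ 2)) := by
    rw [sum_norm_kloostermanSum_pow_four (ZMod.isPrimitive_stdAddChar q), ZMod.card]
    gcongr
    have := card_fourthMomentSolutions_le _ (mem_largeGcd_of_mul_mul_eq_zero (q := q))
    rw [ZMod.card] at this
    exact_mod_cast this
  calc (q.totient : ℝ) * ‖kloostermanSum ZMod.stdAddChar m (k : ZMod q)‖ ^ 4
      = ∑ t : (ZMod q)ˣ,
          ‖kloostermanSum ZMod.stdAddChar (m * (t : ZMod q))
            ((k : ZMod q) * (↑t⁻¹ : ZMod q))‖ ^ 4 := by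
        simp_rw [kloostermanSum_mul_units]
        rw [Finset.sum_const, nsmul_eq_mul, Finset.card_univ, ZMod.card_units_eq_totient]
    _ ≤ ∑ t : (ZMod q)ˣ, ∑ m : ZMod q,
          ‖kloostermanSum ZMod.stdAddChar m ((k : ZMod q) * (↑t⁻¹ : ZMod q))‖ ^ 4 :=
        Finset.sum_le_sum fun t _ ↦ Finset.single_le_sum
          (f := fun m ↦ ‖kloostermanSum ZMod.stdAddChar m ((k : ZMod q) * (↑t⁻¹ : ZMod q))‖ ^ 4)
          (fun _ _ ↦ by positivity) (Finset.mem_univ _)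
    _ ≤ k.natAbs * ∑ l : ZMod q, ∑ m : ZMod q, ‖kloostermanSum ZMod.stdAddChar m l‖ ^ 4 :=
        sum_intCast_mul_units_inv_le hk
          (F := fun l ↦ ∑ m : ZMod q, ‖kloostermanSum ZMod.stdAddChar m l‖ ^ 4)
          fun _ ↦ by positivity
    _ ≤ _ := by gcongr

end ZMod

/-- Kloosterman's bound, with a power saving that is far from Weil's but sufficient here. -/
lemma exists_norm_kloostermanSum_le {k : ℤ} (hk : k ≠ 0) :
    ∃ C : ℝ, 0 < C ∧ ∀ (q : ℕ) [NeZero q] (m : ZMod q),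
      ‖kloostermanSum ZMod.stdAddChar m (k : ZMod q)‖ ≤ C * (q : ℝ) ^ (23 / 24 : ℝ) := by
  obtain ⟨A, hA, card_divisors_le⟩ := exists_card_divisors_le_rpow (ε := 1 / 12) (by norm_num)
  set C : ℝ := 3 * k.natAbs * A ^ 2 with hC
  have hk' : (0 : ℝ) < k.natAbs := by exact_mod_cast Int.natAbs_pos.2 hk
  refine ⟨C ^ (4 : ℝ)⁻¹, by positivity, fun q _ m ↦ ?_⟩
  have hq : (0 : ℝ) < q := by exact_mod_cast NeZero.pos q
  set S : ℝ := ‖kloostermanSum ZMod.stdAddChar m (k : ZMod q)‖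
  set d : ℝ := (q.divisors.card : ℝ) with hd
  have pow_le : q * S ^ 4 ≤ q * (C ^ (4 : ℝ)⁻¹ * (q : ℝ) ^ (23 / 24 : ℝ)) ^ 4 := by
    calc q * S ^ 4 ≤ d * q.totient * S ^ 4 := by
          gcongr
          rw [hd]
          exact_mod_cast le_card_divisors_mul_totient q
      _ = d * (q.totient * S ^ 4) := by ring
      _ ≤ d * (k.natAbs * ((q : ℝ) ^ 2 * (3 * ((largeGcd q).card * (q : ℝ) ^ 2)))) := by
          gcongr d * ?_
          exact totient_mul_norm_kloostermanSum_pow_four_le hk m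
      _ ≤ d * (k.natAbs * ((q : ℝ) ^ 2 * (3 * (d * (q : ℝ) ^ (2 / 3 : ℝ) * (q : ℝ) ^ 2)))) := by
          gcongr
          exact card_largeGcd_le
      _ = 3 * k.natAbs * (d ^ 2 * ((q : ℝ) ^ (2 / 3 : ℝ) * (q : ℝ) ^ 4)) := by ring
      _ ≤ 3 * k.natAbs * ((A * (q : ℝ) ^ (1 / 12 : ℝ)) ^ 2 *
            ((q : ℝ) ^ (2 / 3 : ℝ) * (q : ℝ) ^ 4)) := by
          gcongr
          exact card_divisors_le q (NeZero.ne q)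
      _ = C * (((q : ℝ) ^ (1 / 12 : ℝ)) ^ 2 * ((q : ℝ) ^ (2 / 3 : ℝ) * (q : ℝ) ^ 4)) := by
          rw [hC]; ring
      _ = C * (q * ((q : ℝ) ^ (23 / 24 : ℝ)) ^ 4) := by
          congr 1
          simp only [← Real.rpow_mul_natCast hq.le, ← Real.rpow_natCast (q : ℝ) 4,
            ← Real.rpow_add hq]
          rw [← Real.rpow_one_add' hq.le (by norm_num)]
          norm_num
      _ = q * (C ^ (4 : ℝ)⁻¹ * (q : ℝ) ^ (23 / 24 : ℝ)) ^ 4 := by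
          rw [mul_pow, show (C ^ (4 : ℝ)⁻¹) ^ 4 = C from
            Real.rpow_inv_natCast_pow (by positivity) four_ne_zero]
          ring
  exact le_of_pow_le_pow_left₀ four_ne_zero (by positivity) (le_of_mul_le_mul_left pow_le hq)

/-! ### Incomplete Kloosterman sums -/

lemma two_mul_mul_one_sub_le_sin {t : ℝ} (h₀ : 0 ≤ t) (h₁ : t ≤ 1) :
    2 * (t * (1 - t)) ≤ Real.sin (Real.pi * t) := by
  have jordan : ∀ s : ℝ, 0 ≤ s → s ≤ 1 / 2 → 2 * s ≤ Real.sin (Real.pi * s) := fun s hs hs' ↦ by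
    calc 2 * s = 2 / Real.pi * (Real.pi * s) := by field_simp
      _ ≤ Real.sin (Real.pi * s) :=
        Real.mul_le_sin (by positivity) (by nlinarith [Real.pi_pos])
  rcases le_total t (1 / 2) with h | h
  · nlinarith [jordan t h₀ h]
  · have reflect : Real.sin (Real.pi * (1 - t)) = Real.sin (Real.pi * t) := by
      rw [← Real.sin_pi_sub]
      ring_nf
    nlinarith [jordan (1 - t) (by linarith) (by linarith)]

lemma sum_inv_natCast_le_one_add_log (n : ℕ) :
    ∑ j ∈ Finset.Icc 1 n, (j : ℝ)⁻¹ ≤ 1 + Real.log n := by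
  have := harmonic_le_one_add_log n
  rw [harmonic_eq_sum_Icc] at this
  simpa only [Rat.cast_sum, Rat.cast_inv, Rat.cast_natCast] using this

section ZMod

variable {q : ℕ} [NeZero q]

lemma norm_stdAddChar_sub_one (m : ZMod q) :
    ‖(ZMod.stdAddChar m : ℂ) - 1‖ = 2 * Real.sin (Real.pi * (m.val / q)) := by
  have hq : (0 : ℝ) < q := by exact_mod_cast NeZero.pos q
  have val_le : (m.val : ℝ) / q ≤ 1 :=
    (div_le_one hq).2 (by exact_mod_cast (ZMod.val_lt m).le)
  have char_eq : (ZMod.stdAddChar m : ℂ) =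
      Complex.exp (Complex.I * ((2 * Real.pi * (m.val / q) : ℝ) : ℂ)) := by
    have := ZMod.stdAddChar_coe (N := q) m.val
    rw [Int.cast_natCast, ZMod.natCast_zmod_val] at this
    rw [this]
    congr 1
    push_cast
    ring
  rw [char_eq, Complex.norm_exp_I_mul_ofReal_sub_one, Real.norm_eq_abs,
    show 2 * Real.pi * ((m.val : ℝ) / q) / 2 = Real.pi * (m.val / q) by ring, abs_of_nonneg]
  exact mul_nonneg zero_le_two <| Real.sin_nonneg_of_nonneg_of_le_pi (by positivity)
    (mul_le_of_le_one_right Real.pi_pos.le val_le)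

lemma inv_norm_stdAddChar_sub_one_le {m : ZMod q} (hm : m ≠ 0) :
    ‖(ZMod.stdAddChar m : ℂ) - 1‖⁻¹ ≤ q / 4 * ((m.val : ℝ)⁻¹ + ((-m).val : ℝ)⁻¹) := by
  have hmval : (0 : ℝ) < m.val := by exact_mod_cast ZMod.val_pos.2 hm
  have hlt : (m.val : ℝ) < q := by exact_mod_cast ZMod.val_lt m
  have neg_val : ((-m).val : ℝ) = q - m.val := by
    have : NeZero m := ⟨hm⟩
    rw [ZMod.val_neg_of_ne_zero, Nat.cast_sub (ZMod.val_lt m).le]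
  have hq : (0 : ℝ) < q := hmval.trans hlt
  have hsub : 0 < (q : ℝ) - m.val := sub_pos.2 hlt
  have lower : 4 * (m.val * (q - m.val)) / (q : ℝ) ^ 2 ≤ ‖(ZMod.stdAddChar m : ℂ) - 1‖ := by
    rw [norm_stdAddChar_sub_one]
    calc 4 * (m.val * (q - m.val)) / (q : ℝ) ^ 2
        = 2 * (2 * (m.val / q * (1 - m.val / q))) := by field_simp; ring
      _ ≤ _ := by
        gcongr
        exact two_mul_mul_one_sub_le_sin (by positivity) ((div_le_one hq).2 hlt.le)
  calc ‖(ZMod.stdAddChar m : ℂ) - 1‖⁻¹ ≤ (4 * (m.val * (q - m.val)) / (q : ℝ) ^ 2)⁻¹ := by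
        gcongr
    _ = q / 4 * ((m.val : ℝ)⁻¹ + ((-m).val : ℝ)⁻¹) := by
        rw [neg_val]
        field_simp
        ring

lemma norm_sum_stdAddChar_le {m : ZMod q} (hm : m ≠ 0) (M n : ℕ) :
    ‖∑ i ∈ Finset.range n, (ZMod.stdAddChar (m * ((M + i : ℕ) : ZMod q)) : ℂ)‖ ≤
      q / 2 * ((m.val : ℝ)⁻¹ + ((-m).val : ℝ)⁻¹) := by
  set z : ℂ := ZMod.stdAddChar m
  have norm_z : ‖z‖ = 1 := AddChar.norm_apply ..
  have z_ne_one : z ≠ 1 := fun h ↦ hm <|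
    ZMod.injective_stdAddChar (h.trans ZMod.stdAddChar.map_zero_eq_one.symm)
  have term_eq : ∀ i, (ZMod.stdAddChar (m * ((M + i : ℕ) : ZMod q)) : ℂ) = z ^ M * z ^ i := by
    intro i
    rw [← pow_add, ← AddChar.map_nsmul_eq_pow, nsmul_eq_mul, mul_comm]
  simp_rw [term_eq, ← Finset.mul_sum]
  rw [norm_mul, norm_pow, norm_z, one_pow, one_mul, geom_sum_eq z_ne_one, norm_div,
    div_eq_mul_inv]
  calc ‖z ^ n - 1‖ * ‖z - 1‖⁻¹ ≤ 2 * (q / 4 * ((m.val : ℝ)⁻¹ + ((-m).val : ℝ)⁻¹)) := by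
        gcongr
        · calc ‖z ^ n - 1‖ ≤ ‖z ^ n‖ + ‖(1 : ℂ)‖ := norm_sub_le _ _
            _ = 2 := by rw [norm_pow, norm_z, one_pow, norm_one]; norm_num
        · exact inv_norm_stdAddChar_sub_one_le hm
    _ = q / 2 * ((m.val : ℝ)⁻¹ + ((-m).val : ℝ)⁻¹) := by ring

lemma sum_inv_val_le : ∑ m : ZMod q, (m.val : ℝ)⁻¹ ≤ 1 + Real.log q := by
  calc ∑ m : ZMod q, (m.val : ℝ)⁻¹ = ∑ j ∈ Finset.univ.map ⟨ZMod.val, ZMod.val_injective q⟩,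
        (j : ℝ)⁻¹ := by rw [Finset.sum_map]; rfl
    _ ≤ ∑ j ∈ insert 0 (Finset.Icc 1 q), (j : ℝ)⁻¹ := by
        refine Finset.sum_le_sum_of_subset_of_nonneg (fun j hj ↦ ?_) fun _ _ _ ↦ by positivity
        obtain ⟨m, -, rfl⟩ := Finset.mem_map.1 hj
        have := ZMod.val_lt m
        simp only [Function.Embedding.coeFn_mk, Finset.mem_insert, Finset.mem_Icc]
        omega
    _ = ∑ j ∈ Finset.Icc 1 q, (j : ℝ)⁻¹ := Finset.sum_insert_of_eq_zero_if_notMem (by simp)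
    _ ≤ 1 + Real.log q := sum_inv_natCast_le_one_add_log q

open scoped ZMod in
lemma norm_sum_range_le_of_norm_dft_le {f : ZMod q → ℂ} {B : ℝ} (hf : ∀ m, ‖𝓕 f m‖ ≤ B)
    (M : ℕ) {n : ℕ} (hn : n ≤ q) :
    ‖∑ i ∈ Finset.range n, f (M + i : ℕ)‖ ≤ B * (2 + Real.log q) := by
  have hq : (0 : ℝ) < q := by exact_mod_cast NeZero.pos q
  have hB : 0 ≤ B := (norm_nonneg _).trans (hf 0)
  have expand : ∑ i ∈ Finset.range n, f (M + i : ℕ) = (q : ℂ)⁻¹ * ∑ m, 𝓕 f m *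
      ∑ i ∈ Finset.range n, ZMod.stdAddChar (m * ((M + i : ℕ) : ZMod q)) := by
    have inversion : ∀ a, f a = (q : ℂ)⁻¹ * ∑ m, ZMod.stdAddChar (m * a) * 𝓕 f m := fun a ↦ by
      conv_lhs => rw [← ZMod.dft.symm_apply_apply f]
      simp only [ZMod.invDFT_apply, smul_eq_mul]
    simp_rw [inversion, ← Finset.mul_sum]
    rw [Finset.sum_comm]
    simp_rw [← Finset.sum_mul, mul_comm]
  have inner_le : ∀ m : ZMod q,
      ‖∑ i ∈ Finset.range n, (ZMod.stdAddChar (m * ((M + i : ℕ) : ZMod q)) : ℂ)‖ ≤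
        (if m = 0 then (q : ℝ) else 0) + q / 2 * ((m.val : ℝ)⁻¹ + ((-m).val : ℝ)⁻¹) := by
    intro m
    split_ifs with hm
    · simpa [hm] using hn
    · rw [zero_add]
      exact norm_sum_stdAddChar_le hm M n
  rw [expand, norm_mul, norm_inv, Complex.norm_natCast, inv_mul_le_iff₀ hq]
  calc _ ≤ ∑ m : ZMod q, B * ((if m = 0 then (q : ℝ) else 0) +
          q / 2 * ((m.val : ℝ)⁻¹ + ((-m).val : ℝ)⁻¹)) :=
        norm_sum_le_of_le _ fun m _ ↦ by
          rw [norm_mul]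
          exact mul_le_mul (hf m) (inner_le m) (norm_nonneg _) hB
    _ = B * (q + q * ∑ m : ZMod q, (m.val : ℝ)⁻¹) := by
        have sum_neg : ∑ m : ZMod q, ((-m).val : ℝ)⁻¹ = ∑ m : ZMod q, (m.val : ℝ)⁻¹ :=
          Equiv.sum_comp (Equiv.neg _) fun m : ZMod q ↦ (m.val : ℝ)⁻¹
        rw [← Finset.mul_sum, Finset.sum_add_distrib, ← Finset.mul_sum, Finset.sum_add_distrib,
          sum_neg, Finset.sum_ite_eq' Finset.univ, if_pos (Finset.mem_univ _)]
        ring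
    _ ≤ B * (q + q * (1 + Real.log q)) := by gcongr; exact sum_inv_val_le
    _ = q * (B * (2 + Real.log q)) := by ring

open Classical in
/-- The summand of a Kloosterman sum, `a ↦ ψ (k / a)`, extended by zero to the non-units. -/
noncomputable def unitPhase (k : ZMod q) (a : ZMod q) : ℂ :=
  if IsUnit a then ZMod.stdAddChar (k * a⁻¹) else 0

open scoped ZMod in
lemma dft_unitPhase (k m : ZMod q) :
    𝓕 (unitPhase k) m = kloostermanSum ZMod.stdAddChar (-m) k := by
  classical
  calc 𝓕 (unitPhase k) m
      = ∑ a : ZMod q with IsUnit a, ZMod.stdAddChar (-m * a + k * a⁻¹) := by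
        simp only [ZMod.dft_apply, unitPhase, smul_eq_mul, mul_ite, mul_zero, Finset.sum_filter,
          ← AddChar.map_add_eq_mul, neg_mul, mul_comm m]
    _ = ∑ a ∈ Finset.univ.map ⟨Units.val, Units.val_injective⟩,
          ZMod.stdAddChar (-m * a + k * a⁻¹) := by
        refine Finset.sum_congr (Finset.ext fun a ↦ ?_) fun _ _ ↦ rfl
        simp only [Finset.mem_filter, Finset.mem_univ, true_and, Finset.mem_map]
        rfl
    _ = kloostermanSum ZMod.stdAddChar (-m) k := by
        rw [Finset.sum_map]
        simp [kloostermanSum, ZMod.inv_coe_unit]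

end ZMod

lemma exists_norm_sum_unitPhase_le {k : ℤ} (hk : k ≠ 0) :
    ∃ C : ℝ, 0 < C ∧ ∀ (q : ℕ) [NeZero q] (M n : ℕ), n ≤ q →
      ‖∑ i ∈ Finset.range n, unitPhase (k : ZMod q) (M + i : ℕ)‖ ≤
        C * (q : ℝ) ^ (23 / 24 : ℝ) * (2 + Real.log q) := by
  obtain ⟨C, hC, norm_le⟩ := exists_norm_kloostermanSum_le hk
  exact ⟨C, hC, fun q _ M n hn ↦
    norm_sum_range_le_of_norm_dft_le (fun m ↦ (dft_unitPhase _ m).symm ▸ norm_le q (-m)) M hn⟩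

lemma norm_sum_smul_le_of_antitone {E : Type*} [NormedAddCommGroup E] [NormedSpace ℝ E]
    {a : ℕ → E} {w : ℕ → ℝ} (hw : Antitone w) (hw₀ : ∀ i, 0 ≤ w i) {K : ℝ} {n : ℕ}
    (hK : ∀ j ≤ n, ‖∑ i ∈ Finset.range j, a i‖ ≤ K) :
    ‖∑ i ∈ Finset.range n, w i • a i‖ ≤ K * w 0 := by
  have term_le : ∀ i, ∀ j ≤ n, ∀ c : ℝ, |c| = i → ‖c • ∑ i ∈ Finset.range j, a i‖ ≤ i * K :=
    fun i j hj c hc ↦ by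
      rw [norm_smul, Real.norm_eq_abs, hc]
      exact mul_le_mul_of_nonneg_left (hK j hj) (hc ▸ abs_nonneg c)
  calc ‖∑ i ∈ Finset.range n, w i • a i‖
      ≤ w (n - 1) * K + ∑ i ∈ Finset.range (n - 1), (w i - w (i + 1)) * K := by
        rw [Finset.sum_range_by_parts]
        refine norm_sub_le_of_le (term_le _ n le_rfl _ (abs_of_nonneg (hw₀ _)))
          (norm_sum_le_of_le _ fun i hi ↦ ?_)
        have := Finset.mem_range.1 hi
        refine term_le _ _ (by omega) _ ?_
        rw [abs_of_nonpos (sub_nonpos.2 (hw i.le_succ)), neg_sub]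
    _ = K * w 0 := by
        rw [← Finset.sum_mul, Finset.sum_range_sub']
        ring

/-! ### Farey gaps -/

/-- The pairs of denominators of consecutive fractions in the Farey sequence of order `N`. -/
def fareyPairs (N : ℕ) : Finset (ℕ × ℕ) :=
  {x ∈ Finset.Icc 1 N ×ˢ Finset.Icc 1 N | N < x.1 + x.2 ∧ x.1.Coprime x.2}

/-- The left endpoint `p / q` of the Farey gap in `[0, 1]` with denominators `(q, q')`: since
`p' * q - p * q' = 1` for the right endpoint `p' / q'`, the numerator `p` is `-1 / q'` modulo
`q`. -/
noncomputable def gapLeft (x : ℕ × ℕ) : ℝ := ((-(x.2 : ZMod x.1)⁻¹).val : ℝ) / x.1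

/-- The right endpoint of the Farey gap with the given denominators. -/
noncomputable def gapRight (x : ℕ × ℕ) : ℝ := gapLeft x + 1 / ((x.1 : ℝ) * x.2)

/-- The points of a Farey gap at distance at least `δ / 2` from both of its endpoints. -/
def trimmedGap (δ : ℝ) (x : ℕ × ℕ) : Set ℝ := Set.Icc (gapLeft x + δ / 2) (gapRight x - δ / 2)

/-- The length of `trimmedGap δ x`. -/
noncomputable def gapWeight (δ : ℝ) (x : ℕ × ℕ) : ℝ := max 0 (1 / ((x.1 : ℝ) * x.2) - δ)

/-- The points at distance at least `δ / 2` from every fraction with denominator at most `N`. -/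
def farFromFractions (N : ℕ) (δ : ℝ) : Set ℝ :=
  {t | ∀ q : ℕ, 0 < q → q ≤ N → ∀ p : ℤ, δ / 2 ≤ |t - p / q|}

lemma mem_fareyPairs {N : ℕ} {x : ℕ × ℕ} : x ∈ fareyPairs N ↔
    ((0 < x.1 ∧ x.1 ≤ N) ∧ 0 < x.2 ∧ x.2 ≤ N) ∧ N < x.1 + x.2 ∧ x.1.Coprime x.2 := by
  simp only [fareyPairs, Finset.mem_filter, Finset.mem_product, Finset.mem_Icc, Nat.succ_le_iff]

lemma sum_fareyPairs {M : Type*} [AddCommMonoid M] (N : ℕ) (f : ℕ × ℕ → M) :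
    ∑ x ∈ fareyPairs N, f x = ∑ q ∈ Finset.Icc 1 N, ∑ i ∈ Finset.range q,
      if q.Coprime (N + 1 - q + i) then f (q, N + 1 - q + i) else 0 := by
  rw [fareyPairs, Finset.sum_filter, Finset.sum_product]
  refine Finset.sum_congr rfl fun q hq ↦ ?_
  rw [Finset.mem_Icc] at hq
  have row : {q' ∈ Finset.Icc 1 N | N < q + q'} = Finset.Ico (N + 1 - q) (N + 1) := by
    ext q'
    simp only [Finset.mem_filter, Finset.mem_Icc, Finset.mem_Ico]
    omega
  simp only [ite_and]
  rw [← Finset.sum_filter, row, Finset.sum_Ico_eq_sum_range, show N + 1 - (N + 1 - q) = q by omega]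

lemma gapWeight_nonneg (δ : ℝ) (x : ℕ × ℕ) : 0 ≤ gapWeight δ x := le_max_left _ _

lemma fourier_gapLeft {q q' : ℕ} [NeZero q] (h : q.Coprime q') (k : ℤ) :
    fourier k (gapLeft (q, q') : UnitAddCircle) = unitPhase ((-k : ℤ) : ZMod q) (q' : ZMod q) := by
  have phase_eq : ((-k : ℤ) : ZMod q) * (q' : ZMod q)⁻¹ =
      ((k * (-(q' : ZMod q)⁻¹).val : ℤ) : ZMod q) := by
    push_cast
    rw [ZMod.natCast_zmod_val]
    ring
  rw [unitPhase, if_pos ((ZMod.isUnit_iff_coprime q' q).2 h.symm), phase_eq, ZMod.stdAddChar_coe,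
    fourier_coe_apply, gapLeft]
  congr 1
  push_cast
  ring

lemma gapWeight_le {δ : ℝ} (hδ : 0 ≤ δ) {N q : ℕ} (hq : 0 < q) (hqN : q ≤ N) :
    gapWeight δ (q, N + 1 - q) ≤ 1 / N * ((q : ℝ)⁻¹ + ((N + 1 - q : ℕ) : ℝ)⁻¹) := by
  have hq' : (0 : ℝ) < q := by exact_mod_cast hq
  have hN : (0 : ℝ) < N := by exact_mod_cast hq.trans_le hqN
  have hr : (0 : ℝ) < (N + 1 - q : ℕ) := by exact_mod_cast Nat.sub_pos_of_lt (Nat.lt_succ_of_le hqN)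
  have add_eq : (q : ℝ) + (N + 1 - q : ℕ) = N + 1 := by exact_mod_cast (by omega : q + _ = N + 1)
  refine max_le (by positivity) ((sub_le_self _ hδ).trans ?_)
  rw [inv_add_inv hq'.ne' hr.ne', add_eq, div_mul_div_comm, one_mul]
  simp only
  rw [div_le_div_iff₀ (by positivity) (by positivity)]
  nlinarith [mul_pos hq' hr]

lemma sum_inv_reflect (N : ℕ) :
    ∑ q ∈ Finset.Icc 1 N, ((N + 1 - q : ℕ) : ℝ)⁻¹ = ∑ q ∈ Finset.Icc 1 N, (q : ℝ)⁻¹ := by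
  refine Finset.sum_nbij' (N + 1 - ·) (N + 1 - ·) ?_ ?_ ?_ ?_ (fun _ _ ↦ rfl) <;>
    (simp only [Finset.mem_Icc]; omega)

lemma norm_sum_gapWeight_smul_fourier_row_le {δ : ℝ} {N q : ℕ} [NeZero q] (hqN : q ≤ N) (k : ℤ)
    {K : ℝ} (hK : ∀ j ≤ q,
      ‖∑ i ∈ Finset.range j, unitPhase ((-k : ℤ) : ZMod q) (N + 1 - q + i : ℕ)‖ ≤ K) :
    ‖∑ i ∈ Finset.range q, if q.Coprime (N + 1 - q + i) then gapWeight δ (q, N + 1 - q + i) •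
      (fourier k (gapLeft (q, N + 1 - q + i) : UnitAddCircle) : ℂ) else 0‖ ≤
      K * gapWeight δ (q, N + 1 - q) := by
  have term_eq : ∀ i, (if q.Coprime (N + 1 - q + i) then gapWeight δ (q, N + 1 - q + i) •
      (fourier k (gapLeft (q, N + 1 - q + i) : UnitAddCircle) : ℂ) else 0) =
      gapWeight δ (q, N + 1 - q + i) •
        unitPhase ((-k : ℤ) : ZMod q) ((N + 1 - q + i : ℕ) : ZMod q) := by
    intro i
    split_ifs with h
    · rw [fourier_gapLeft h]
    · rw [unitPhase, if_neg (by rwa [ZMod.isUnit_iff_coprime, Nat.coprime_comm]), smul_zero]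
  have weight_antitone : Antitone fun i ↦ gapWeight δ (q, N + 1 - q + i) := fun i j hij ↦ by
    have hq := NeZero.pos q
    have : (0 : ℝ) < (N + 1 - q + i : ℕ) := by exact_mod_cast (by omega : 0 < N + 1 - q + i)
    simp only [gapWeight]
    gcongr
  simp_rw [term_eq]
  exact norm_sum_smul_le_of_antitone weight_antitone (fun _ ↦ gapWeight_nonneg _ _) hK

lemma exists_norm_sum_gapWeight_smul_fourier_le {k : ℤ} (hk : k ≠ 0) :
    ∃ C : ℝ, ∀ (N : ℕ) (δ : ℝ), 0 < N → 0 ≤ δ →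
      ‖∑ x ∈ fareyPairs N, gapWeight δ x • fourier k (gapLeft x : UnitAddCircle)‖ ≤
        C * ((N : ℝ) ^ (-(1 / 24) : ℝ) * (2 + Real.log N) ^ 2) := by
  obtain ⟨C, hC, incomplete⟩ := exists_norm_sum_unitPhase_le (neg_ne_zero.2 hk)
  refine ⟨2 * C, fun N δ hN hδ ↦ ?_⟩
  have hN' : (0 : ℝ) < N := by exact_mod_cast hN
  set K := C * (N : ℝ) ^ (23 / 24 : ℝ) * (2 + Real.log N) with hK
  have row_le : ∀ q ∈ Finset.Icc 1 N, ‖∑ i ∈ Finset.range q, if q.Coprime (N + 1 - q + i) then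
      gapWeight δ (q, N + 1 - q + i) •
        (fourier k (gapLeft (q, N + 1 - q + i) : UnitAddCircle) : ℂ) else 0‖ ≤
      K * (1 / N * ((q : ℝ)⁻¹ + ((N + 1 - q : ℕ) : ℝ)⁻¹)) := by
    intro q hq
    obtain ⟨hq, hqN⟩ := Finset.mem_Icc.1 hq
    have : NeZero q := ⟨by omega⟩
    refine (norm_sum_gapWeight_smul_fourier_row_le hqN k fun j hj ↦
      (incomplete q _ j hj).trans (?_ : _ ≤ K)).trans ?_
    · rw [hK]
      gcongr
    · exact mul_le_mul_of_nonneg_left (gapWeight_le hδ hq hqN) (by positivity)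
  rw [sum_fareyPairs]
  calc _ ≤ ∑ q ∈ Finset.Icc 1 N, K * (1 / N * ((q : ℝ)⁻¹ + ((N + 1 - q : ℕ) : ℝ)⁻¹)) :=
        norm_sum_le_of_le _ row_le
    _ = 2 * K / N * ∑ q ∈ Finset.Icc 1 N, (q : ℝ)⁻¹ := by
        rw [← Finset.mul_sum, ← Finset.mul_sum, Finset.sum_add_distrib, sum_inv_reflect]
        ring
    _ ≤ 2 * K / N * (2 + Real.log N) := by
        gcongr
        exact (sum_inv_natCast_le_one_add_log N).trans (by linarith)
    _ = 2 * C * ((N : ℝ) ^ (-(1 / 24) : ℝ) * (2 + Real.log N) ^ 2) := by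
        have : (N : ℝ) ^ (-(1 / 24) : ℝ) = (N : ℝ) ^ (23 / 24 : ℝ) / N := by
          rw [← Real.rpow_sub_one hN'.ne']
          norm_num
        rw [this, hK]
        ring

lemma coprime_of_mul_eq_mul_add_one {p q p' q' : ℕ} (h : p' * q = p * q' + 1) :
    p.Coprime q ∧ p'.Coprime q' ∧ q.Coprime q' := by
  have h' : (p' : ℤ) * q = p * q' + 1 := by exact_mod_cast h
  simp only [← Nat.isCoprime_iff_coprime]
  exact ⟨⟨-q', p', by linear_combination h'⟩, ⟨q, -p, by linear_combination h'⟩,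
    ⟨p', -p, by linear_combination h'⟩⟩

lemma gapRight_eq {p q p' q' : ℕ} (hq : 0 < q) (hq' : 0 < q') (h : p' * q = p * q' + 1)
    (left_eq : gapLeft (q, q') = p / q) : gapRight (q, q') = p' / q' := by
  have h' : (p' : ℝ) * q = p * q' + 1 := by exact_mod_cast h
  rw [gapRight, left_eq]
  field_simp
  linarith

lemma gapLeft_eq {p q p' q' : ℕ} (hpq : p < q) (h : p' * q = p * q' + 1) :
    gapLeft (q, q') = p / q := by
  have : NeZero q := ⟨by omega⟩
  have det : (p : ZMod q) * q' + 1 = 0 := by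
    have := congrArg (Nat.cast : ℕ → ZMod q) h
    push_cast at this
    rw [← this, ZMod.natCast_self, mul_zero]
  have inv_eq : -(q' : ZMod q)⁻¹ = p := by
    linear_combination (p : ZMod q) * ZMod.coe_mul_inv_eq_one q'
      (coprime_of_mul_eq_mul_add_one h).2.2.symm - (q' : ZMod q)⁻¹ * det
  rw [gapLeft, inv_eq, ZMod.val_cast_of_lt hpq]

lemma exists_gap_endpoints {N : ℕ} {x : ℕ × ℕ} (hx : x ∈ fareyPairs N) :
    ∃ p p' : ℕ, p < x.1 ∧ p' * x.1 = p * x.2 + 1 ∧ gapLeft x = p / x.1 ∧ gapRight x = p' / x.2 := by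
  obtain ⟨⟨⟨hq, -⟩, hq', -⟩, -, coprime⟩ := mem_fareyPairs.1 hx
  have : NeZero x.1 := ⟨hq.ne'⟩
  set p := (-(x.2 : ZMod x.1)⁻¹).val with hp
  obtain ⟨p', hp'⟩ : x.1 ∣ p * x.2 + 1 := by
    rw [← ZMod.natCast_eq_zero_iff]
    push_cast
    rw [hp, ZMod.natCast_zmod_val]
    linear_combination -ZMod.coe_mul_inv_eq_one x.2 coprime.symm
  have det : p' * x.1 = p * x.2 + 1 := by rw [hp', mul_comm]
  exact ⟨p, p', ZMod.val_lt _, det, rfl, gapRight_eq hq hq' det rfl⟩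

lemma add_le_of_div_lt_of_lt_div {p q p' q' b : ℕ} {a : ℤ} (hq : 0 < q) (hq' : 0 < q')
    (hb : 0 < b) (det : p' * q = p * q' + 1) (h₁ : (p : ℝ) / q < a / b)
    (h₂ : (a : ℝ) / b < p' / q') : q + q' ≤ b := by
  rw [div_lt_div_iff₀ (by exact_mod_cast hq) (by exact_mod_cast hb)] at h₁
  rw [div_lt_div_iff₀ (by exact_mod_cast hb) (by exact_mod_cast hq')] at h₂
  have left_pos : 1 ≤ a * q - p * b := Int.sub_pos_of_lt (by exact_mod_cast h₁)
  have right_pos : 1 ≤ p' * b - a * q' := Int.sub_pos_of_lt (by exact_mod_cast h₂)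
  zify at det ⊢
  calc (q : ℤ) + q' ≤ (p' * b - a * q') * q + (a * q - p * b) * q' :=
        add_le_add (le_mul_of_one_le_left q.cast_nonneg right_pos)
          (le_mul_of_one_le_left q'.cast_nonneg left_pos)
    _ = b := by linear_combination b * det

lemma eq_of_div_eq_div_of_coprime {a b c d : ℕ} (hb : 0 < b) (hd : 0 < d) (h₁ : a.Coprime b)
    (h₂ : c.Coprime d) (h : (a : ℝ) / b = c / d) : b = d := by
  rw [div_eq_div_iff (by positivity) (by positivity)] at h
  have h : a * d = c * b := by exact_mod_cast h
  exact (h₁.symm.dvd_of_dvd_mul_left (h ▸ Dvd.intro_left c rfl)).antisymm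
    (h₂.symm.dvd_of_dvd_mul_left (h ▸ Dvd.intro_left a rfl))

lemma trimmedGap_subset {δ : ℝ} (hδ : 0 < δ) (x : ℕ × ℕ) :
    trimmedGap δ x ⊆ Set.Ioo (gapLeft x) (gapRight x) :=
  fun t ⟨le_t, t_le⟩ ↦ ⟨by linarith, by linarith⟩

section Gap

variable {N : ℕ} {x : ℕ × ℕ} (hx : x ∈ fareyPairs N)

include hx

lemma fraction_notMem_gap {b : ℕ} (hb : 0 < b) (hbN : b ≤ N) (a : ℤ) :
    (a : ℝ) / b ≤ gapLeft x ∨ gapRight x ≤ a / b := by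
  obtain ⟨⟨⟨hq, -⟩, hq', -⟩, add_gt, -⟩ := mem_fareyPairs.1 hx
  obtain ⟨p, p', -, det, left_eq, right_eq⟩ := exists_gap_endpoints hx
  rw [left_eq, right_eq]
  by_contra! inside
  have := add_le_of_div_lt_of_lt_div hq hq' hb det inside.1 inside.2
  omega

lemma gap_subset_Icc : Set.Icc (gapLeft x) (gapRight x) ⊆ Set.Icc 0 1 := by
  obtain ⟨⟨⟨hq, -⟩, hq', -⟩, -, -⟩ := mem_fareyPairs.1 hx
  obtain ⟨p, p', hp, det, left_eq, right_eq⟩ := exists_gap_endpoints hx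
  have p'_le : p' ≤ x.2 := Nat.le_of_mul_le_mul_right (by nlinarith) hq
  rw [left_eq, right_eq]
  exact Set.Icc_subset_Icc (by positivity)
    ((div_le_one (by exact_mod_cast hq')).2 (by exact_mod_cast p'_le))

lemma gap_length_le : gapRight x - gapLeft x ≤ 1 / N := by
  obtain ⟨⟨⟨hq, hqN⟩, hq', -⟩, add_gt, -⟩ := mem_fareyPairs.1 hx
  have hN : (0 : ℝ) < N := by exact_mod_cast hq.trans_le hqN
  have : (N : ℝ) ≤ x.1 * x.2 := by exact_mod_cast (by nlinarith [hq, hq'] : N ≤ x.1 * x.2)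
  rw [gapRight, add_sub_cancel_left]
  gcongr

lemma mem_farFromFractions_iff_mem_trimmedGap {δ t : ℝ}
    (ht : t ∈ Set.Ioo (gapLeft x) (gapRight x)) :
    t ∈ farFromFractions N δ ↔ t ∈ trimmedGap δ x := by
  obtain ⟨⟨⟨hq, hqN⟩, hq', hqN'⟩, -, -⟩ := mem_fareyPairs.1 hx
  obtain ⟨p, p', -, -, left_eq, right_eq⟩ := exists_gap_endpoints hx
  refine ⟨fun far ↦ ?_, fun ⟨le_t, t_le⟩ b hb hbN a ↦ ?_⟩
  · have far_left := far x.1 hq hqN p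
    have far_right := far x.2 hq' hqN' p'
    rw [Int.cast_natCast, ← left_eq, abs_of_pos (sub_pos.2 ht.1)] at far_left
    rw [Int.cast_natCast, ← right_eq, abs_of_neg (sub_neg.2 ht.2)] at far_right
    constructor <;> linarith
  · rcases fraction_notMem_gap hx hb hbN a with h | h
    · exact le_abs.2 (.inl (by linarith))
    · exact le_abs.2 (.inr (by linarith))

lemma gap_endpoints_le_of_mem {y : ℕ × ℕ} (hy : y ∈ fareyPairs N) {t : ℝ}
    (htx : t ∈ Set.Ioo (gapLeft x) (gapRight x)) (hty : t ∈ Set.Ioo (gapLeft y) (gapRight y)) :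
    gapLeft y ≤ gapLeft x ∧ gapRight x ≤ gapRight y := by
  obtain ⟨⟨⟨hq, hqN⟩, hq', hqN'⟩, -, -⟩ := mem_fareyPairs.1 hy
  obtain ⟨p, p', -, -, left_eq, right_eq⟩ := exists_gap_endpoints hy
  have left_outside := fraction_notMem_gap hx hq hqN p
  have right_outside := fraction_notMem_gap hx hq' hqN' p'
  rw [Int.cast_natCast, ← left_eq] at left_outside
  rw [Int.cast_natCast, ← right_eq] at right_outside
  exact ⟨left_outside.resolve_right (hty.1.trans htx.2).not_ge,
    right_outside.resolve_left (htx.1.trans hty.2).not_ge⟩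

lemma eq_of_mem_gap {y : ℕ × ℕ} (hy : y ∈ fareyPairs N) {t : ℝ}
    (htx : t ∈ Set.Ioo (gapLeft x) (gapRight x)) (hty : t ∈ Set.Ioo (gapLeft y) (gapRight y)) :
    x = y := by
  obtain ⟨⟨⟨hq, -⟩, hq', -⟩, -, -⟩ := mem_fareyPairs.1 hx
  obtain ⟨⟨⟨hr, -⟩, hr', -⟩, -, -⟩ := mem_fareyPairs.1 hy
  obtain ⟨p, p', -, det_x, left_x, right_x⟩ := exists_gap_endpoints hx
  obtain ⟨s, s', -, det_y, left_y, right_y⟩ := exists_gap_endpoints hy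
  obtain ⟨coprime_left_x, coprime_right_x, -⟩ := coprime_of_mul_eq_mul_add_one det_x
  obtain ⟨coprime_left_y, coprime_right_y, -⟩ := coprime_of_mul_eq_mul_add_one det_y
  obtain ⟨left_le, right_le⟩ := gap_endpoints_le_of_mem hx hy htx hty
  obtain ⟨left_ge, right_ge⟩ := gap_endpoints_le_of_mem hy hx hty htx
  have left_eq := left_ge.antisymm left_le
  have right_eq := right_le.antisymm right_ge
  rw [left_x, left_y] at left_eq
  rw [right_x, right_y] at right_eq
  exact Prod.ext (eq_of_div_eq_div_of_coprime hq hr coprime_left_x coprime_left_y left_eq)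
    (eq_of_div_eq_div_of_coprime hq' hr' coprime_right_x coprime_right_y right_eq)

end Gap

/-- Descent through the Farey sequences: when the mediant of two neighbours has denominator at most
`N + 1`, it replaces the neighbour on its side of `t`. -/
lemma exists_consecutive_fractions {t : ℝ} (ht : Irrational t) (h₀ : 0 < t) (h₁ : t < 1) {N : ℕ}
    (hN : 1 ≤ N) :
    ∃ p q p' q' : ℕ, ((0 < q ∧ q ≤ N) ∧ 0 < q' ∧ q' ≤ N) ∧ N < q + q' ∧ p' * q = p * q' + 1 ∧
      (p : ℝ) / q < t ∧ t < (p' : ℝ) / q' := by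
  induction N, hN using Nat.le_induction with
  | base => exact ⟨0, 1, 1, 1, by simp [h₀, h₁]⟩
  | succ N hN ih =>
    obtain ⟨p, q, p', q', ⟨⟨hq, hqN⟩, hq', hqN'⟩, add_gt, det, left_lt, lt_right⟩ := ih
    by_cases add_gt' : N + 1 < q + q'
    · exact ⟨p, q, p', q', by omega, add_gt', det, left_lt, lt_right⟩
    have ne_mediant : t ≠ ((p + p' : ℕ) : ℝ) / ((q + q' : ℕ) : ℝ) := by
      simpa using ht.ne_rational (p + p') (q + q')
    rcases lt_or_gt_of_ne ne_mediant with lt_mediant | mediant_lt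
    · exact ⟨p, q, p + p', q + q', by omega, by omega, by linarith, left_lt, lt_mediant⟩
    · exact ⟨p + p', q + q', p', q', by omega, by omega, by linarith, mediant_lt, lt_right⟩

lemma exists_mem_gap {t : ℝ} (ht : Irrational t) (h₀ : 0 < t) (h₁ : t < 1) {N : ℕ} (hN : 1 ≤ N) :
    ∃ x ∈ fareyPairs N, t ∈ Set.Ioo (gapLeft x) (gapRight x) := by
  obtain ⟨p, q, p', q', bounds, add_gt, det, left_lt, lt_right⟩ :=
    exists_consecutive_fractions ht h₀ h₁ hN
  have hpq : p < q := by
    exact_mod_cast (div_lt_one (by exact_mod_cast bounds.1.1)).1 (left_lt.trans h₁)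
  have left_eq := gapLeft_eq hpq det
  refine ⟨(q, q'),
    mem_fareyPairs.2 ⟨bounds, add_gt, (coprime_of_mul_eq_mul_add_one det).2.2⟩, ?_, ?_⟩
  · rwa [left_eq]
  · rwa [gapRight_eq bounds.1.1 bounds.2.1 det left_eq]

lemma farFromFractions_ae_eq {N : ℕ} (hN : 1 ≤ N) {δ : ℝ} (hδ : 0 < δ) :
    (Set.Ioc 0 1 ∩ farFromFractions N δ : Set ℝ) =ᵐ[volume]
      (⋃ x ∈ fareyPairs N, trimmedGap δ x : Set ℝ) := by
  have ae_irrational : ∀ᵐ t : ℝ, Irrational t := (Set.countable_range ((↑) : ℚ → ℝ)).ae_notMem _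
  filter_upwards [ae_irrational] with t ht
  refine propext ⟨fun ⟨⟨h₀, h₁⟩, far⟩ ↦ ?_, fun h ↦ ?_⟩
  · obtain ⟨x, hx, htx⟩ := exists_mem_gap ht h₀ (h₁.lt_of_ne ht.ne_one) hN
    exact Set.mem_biUnion hx ((mem_farFromFractions_iff_mem_trimmedGap hx htx).1 far)
  · obtain ⟨x, hx, htx⟩ := Set.mem_iUnion₂.1 h
    have inside := trimmedGap_subset hδ _ htx
    have bounds := gap_subset_Icc hx (Set.Ioo_subset_Icc_self inside)
    exact ⟨⟨bounds.1.lt_of_ne' ht.ne_zero, bounds.2⟩,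
      (mem_farFromFractions_iff_mem_trimmedGap hx inside).2 htx⟩

lemma volume_real_trimmedGap (δ : ℝ) (x : ℕ × ℕ) :
    volume.real (trimmedGap δ x) = gapWeight δ x := by
  rw [trimmedGap, Real.volume_real_Icc, max_comm, gapWeight, gapRight]
  congr 1
  ring

lemma setIntegral_farFromFractions {E : Type*} [NormedAddCommGroup E] [NormedSpace ℝ E] {N : ℕ}
    (hN : 1 ≤ N) {δ : ℝ} (hδ : 0 < δ) {f : ℝ → E} (hf : Continuous f) :
    ∫ t in Set.Ioc 0 1 ∩ farFromFractions N δ, f t =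
      ∑ x ∈ fareyPairs N, ∫ t in trimmedGap δ x, f t := by
  rw [setIntegral_congr_set (farFromFractions_ae_eq hN hδ)]
  refine integral_biUnion_finset _ (fun _ _ ↦ measurableSet_Icc) (fun x hx y hy hxy ↦ ?_)
    fun _ _ ↦ hf.continuousOn.integrableOn_Icc
  exact Set.disjoint_left.2 fun t htx hty ↦
    hxy (eq_of_mem_gap hx hy (trimmedGap_subset hδ _ htx) (trimmedGap_subset hδ _ hty))

lemma sum_gapWeight {N : ℕ} (hN : 1 ≤ N) {δ : ℝ} (hδ : 0 < δ) :
    ∑ x ∈ fareyPairs N, gapWeight δ x = volume.real (Set.Ioc 0 1 ∩ farFromFractions N δ) := by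
  have := setIntegral_farFromFractions hN hδ (continuous_const (y := (1 : ℝ)))
  simpa only [setIntegral_const, smul_eq_mul, mul_one, volume_real_trimmedGap] using this.symm

lemma norm_fourier_sub_fourier_le (k : ℤ) (s t : ℝ) :
    ‖(fourier k (t : UnitAddCircle) : ℂ) - fourier k (s : UnitAddCircle)‖ ≤
      2 * Real.pi * |(k : ℝ)| * |t - s| := by
  have factor : (fourier k (t : UnitAddCircle) : ℂ) - fourier k (s : UnitAddCircle) =
      fourier k (s : UnitAddCircle) *
        (Complex.exp (Complex.I * ((2 * Real.pi * k * (t - s) : ℝ) : ℂ)) - 1) := by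
    simp only [fourier_coe_apply]
    rw [mul_sub, mul_one, ← Complex.exp_add]
    congr 2
    push_cast
    ring
  rw [factor, norm_mul, fourier_apply, Circle.norm_coe, one_mul]
  refine Real.norm_exp_I_mul_ofReal_sub_one_le.trans_eq ?_
  simp only [Real.norm_eq_abs, abs_mul, abs_two, abs_of_pos Real.pi_pos]

lemma norm_setIntegral_fourier_sub_sum_le (k : ℤ) {N : ℕ} (hN : 1 ≤ N) {δ : ℝ} (hδ : 0 < δ) :
    ‖(∫ t in Set.Ioc 0 1 ∩ farFromFractions N δ, fourier k (t : UnitAddCircle)) -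
      ∑ x ∈ fareyPairs N, gapWeight δ x • fourier k (gapLeft x : UnitAddCircle)‖ ≤
        2 * Real.pi * |(k : ℝ)| / N := by
  have hf : Continuous fun t : ℝ ↦ (fourier k (t : UnitAddCircle) : ℂ) :=
    (fourier k).continuous.comp (AddCircle.continuous_mk' 1)
  have gap_le : ∀ x ∈ fareyPairs N,
      ‖(∫ t in trimmedGap δ x, fourier k (t : UnitAddCircle)) -
        gapWeight δ x • (fourier k (gapLeft x : UnitAddCircle) : ℂ)‖ ≤
      2 * Real.pi * |(k : ℝ)| / N * gapWeight δ x := by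
    intro x hx
    rw [← volume_real_trimmedGap, ← setIntegral_const, trimmedGap, ← integral_sub
      hf.continuousOn.integrableOn_Icc continuousOn_const.integrableOn_Icc]
    refine norm_setIntegral_le_of_norm_le_const measure_Icc_lt_top fun t ht ↦ ?_
    have length_le := gap_length_le hx
    have inside := trimmedGap_subset hδ _ ht
    refine (norm_fourier_sub_fourier_le k _ t).trans ?_
    rw [abs_of_pos (sub_pos.2 inside.1), div_eq_mul_one_div _ (N : ℝ)]
    gcongr
    linarith [inside.2]
  have weight_le : ∑ x ∈ fareyPairs N, gapWeight δ x ≤ 1 := by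
    rw [sum_gapWeight hN hδ]
    exact (measureReal_mono Set.inter_subset_left measure_Ioc_lt_top.ne).trans_eq (by simp)
  rw [setIntegral_farFromFractions hN hδ hf, ← Finset.sum_sub_distrib]
  calc _ ≤ ∑ x ∈ fareyPairs N, 2 * Real.pi * |(k : ℝ)| / N * gapWeight δ x :=
        norm_sum_le_of_le _ gap_le
    _ ≤ 2 * Real.pi * |(k : ℝ)| / N := by
        rw [← Finset.mul_sum]
        exact mul_le_of_le_one_right (by positivity) weight_le

/-! ### The main term -/

/-- The region filled by the scaled Farey pairs `(q / N, q' / N)`. -/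
def fareyTriangle : Set (ℝ × ℝ) := {z | z.1 ≤ 1 ∧ z.2 ≤ 1 ∧ 1 < z.1 + z.2}

/-- The scaling limit of the gap weight, for gaps trimmed by `c / N ^ 2`. -/
noncomputable def gapKernel (c : ℝ) : ℝ × ℝ → ℝ :=
  fareyTriangle.indicator fun z ↦ max 0 (1 / (z.1 * z.2) - c)

/-- The upper right corner of the cell containing `z` in the square grid of mesh `1 / X`. -/
noncomputable def gridCorner (X : ℝ) (z : ℝ × ℝ) : ℝ × ℝ := (⌈z.1 * X⌉ / X, ⌈z.2 * X⌉ / X)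

/-- The cell of the square grid of mesh `1 / X` with upper right corner `(e.1 / X, e.2 / X)`. -/
def gridCell (X : ℝ) (e : ℕ × ℕ) : Set (ℝ × ℝ) := gridCorner X ⁻¹' {(e.1 / X, e.2 / X)}

/-- The Riemann sum of `f` over the unit square, evaluated at the upper right corners of the cells
of a square grid of mesh `1 / X`. -/
noncomputable def riemannSum (f : ℝ × ℝ → ℝ) (X : ℝ) : ℝ :=
  (X ^ 2)⁻¹ * ∑ e ∈ Finset.Icc 1 ⌊X⌋₊ ×ˢ Finset.Icc 1 ⌊X⌋₊, f (e.1 / X, e.2 / X)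

lemma measurable_gridCorner (X : ℝ) : Measurable (gridCorner X) := by
  unfold gridCorner
  fun_prop

lemma le_ceil_mul_div {X : ℝ} (hX : 0 < X) (u : ℝ) : u ≤ ⌈u * X⌉ / X :=
  (le_div_iff₀ hX).2 (Int.le_ceil _)

lemma ceil_mul_div_lt {X : ℝ} (hX : 0 < X) (u : ℝ) : ⌈u * X⌉ / X < u + 1 / X := by
  rw [div_lt_iff₀ hX, add_mul, one_div_mul_cancel hX.ne']
  exact Int.ceil_lt_add_one _

lemma tendsto_gridCorner (z : ℝ × ℝ) : Tendsto (fun X ↦ gridCorner X z) atTop (𝓝 z) := by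
  have tendsto_coord (u : ℝ) : Tendsto (fun X : ℝ ↦ ⌈u * X⌉ / X) atTop (𝓝 u) := by
    refine tendsto_of_tendsto_of_tendsto_of_le_of_le' tendsto_const_nhds
      (by simpa using tendsto_inv_atTop_zero.const_add u) ?_ ?_
    · filter_upwards [eventually_gt_atTop 0] with X hX using le_ceil_mul_div hX u
    · filter_upwards [eventually_gt_atTop 0] with X hX
      simpa using (ceil_mul_div_lt hX u).le
  exact (tendsto_coord z.1).prodMk_nhds (tendsto_coord z.2)

lemma measurableSet_gridCell (X : ℝ) (e : ℕ × ℕ) : MeasurableSet (gridCell X e) :=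
  measurable_gridCorner X (measurableSet_singleton _)

lemma volume_gridCell {X : ℝ} (hX : 0 < X) (e : ℕ × ℕ) :
    volume (gridCell X e) = ENNReal.ofReal (X ^ 2)⁻¹ := by
  have cell_eq : gridCell X e =
      Set.Ioc ((e.1 - 1 : ℝ) / X) (e.1 / X) ×ˢ Set.Ioc ((e.2 - 1 : ℝ) / X) (e.2 / X) := by
    ext z
    simp only [gridCell, gridCorner, Set.mem_preimage, Set.mem_singleton_iff, Prod.mk.injEq,
      div_left_inj' hX.ne', ← Int.cast_natCast (R := ℝ), Int.cast_inj, Int.ceil_eq_iff,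
      Set.mem_prod, Set.mem_Ioc, div_lt_iff₀ hX, le_div_iff₀ hX]
  have length_eq (m : ℝ) : m / X - (m - 1) / X = X⁻¹ := by ring
  rw [cell_eq, Measure.volume_eq_prod, Measure.prod_prod, Real.volume_Ioc, Real.volume_Ioc,
    length_eq, length_eq, ← ENNReal.ofReal_mul (by positivity), ← sq, inv_pow]

lemma exists_mem_gridCell {X : ℝ} (hX : 0 < X) {z : ℝ × ℝ}
    (hz : gridCorner X z ∈ Set.Ioc 0 1 ×ˢ Set.Ioc 0 1) :
    ∃ e ∈ Finset.Icc 1 ⌊X⌋₊ ×ˢ Finset.Icc 1 ⌊X⌋₊, z ∈ gridCell X e := by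
  have exists_index {u : ℝ} (hu : ⌈u * X⌉ / X ∈ Set.Ioc 0 1) :
      ∃ m ∈ Finset.Icc 1 ⌊X⌋₊, ⌈u * X⌉ = m := by
    have pos : (0 : ℝ) < ⌈u * X⌉ := (div_pos_iff_of_pos_right hX).1 hu.1
    have le : ⌈u * X⌉ ≤ X := (div_le_one hX).1 hu.2
    lift ⌈u * X⌉ to ℕ using (Int.cast_pos.1 pos).le with m
    rw [Int.cast_natCast] at pos le
    exact ⟨m, Finset.mem_Icc.2 ⟨Nat.cast_pos.1 pos, Nat.le_floor le⟩, rfl⟩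
  obtain ⟨m, hm, ceil_eq₁⟩ := exists_index hz.1
  obtain ⟨n, hn, ceil_eq₂⟩ := exists_index hz.2
  refine ⟨(m, n), Finset.mk_mem_product hm hn, ?_⟩
  simp [gridCell, gridCorner, ceil_eq₁, ceil_eq₂]

lemma comp_gridCorner_eq_sum {f : ℝ × ℝ → ℝ}
    (hf : Function.support f ⊆ Set.Ioc 0 1 ×ˢ Set.Ioc 0 1) {X : ℝ} (hX : 0 < X) (z : ℝ × ℝ) :
    f (gridCorner X z) = ∑ e ∈ Finset.Icc 1 ⌊X⌋₊ ×ˢ Finset.Icc 1 ⌊X⌋₊,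
      (gridCell X e).indicator (fun _ ↦ f (e.1 / X, e.2 / X)) z := by
  have indicator_eq (e : ℕ × ℕ) : (gridCell X e).indicator (fun _ ↦ f (e.1 / X, e.2 / X)) z =
      (gridCell X e).indicator (fun _ ↦ f (gridCorner X z)) z := by
    by_cases he : z ∈ gridCell X e
    · rw [Set.indicator_of_mem he, Set.indicator_of_mem he, show gridCorner X z = _ from he]
    · rw [Set.indicator_of_notMem he, Set.indicator_of_notMem he]
  simp only [indicator_eq]
  by_cases hz : f (gridCorner X z) = 0
  · simp only [hz, Set.indicator_zero, Finset.sum_const_zero]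
  obtain ⟨e, he, mem_cell⟩ := exists_mem_gridCell hX (hf (Function.mem_support.2 hz))
  rw [Finset.sum_eq_single_of_mem e he, Set.indicator_of_mem mem_cell]
  refine fun e' _ ne ↦ Set.indicator_of_notMem (fun mem_cell' ↦ ne ?_) _
  have corner_eq := (show gridCorner X z = _ from mem_cell').symm.trans mem_cell
  simp only [Prod.mk.injEq, div_left_inj' hX.ne', Nat.cast_inj] at corner_eq
  exact Prod.ext corner_eq.1 corner_eq.2

lemma integral_comp_gridCorner {f : ℝ × ℝ → ℝ}
    (hf : Function.support f ⊆ Set.Ioc 0 1 ×ˢ Set.Ioc 0 1) {X : ℝ} (hX : 0 < X) :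
    ∫ z, f (gridCorner X z) = riemannSum f X := by
  have integrable (e : ℕ × ℕ) :
      Integrable ((gridCell X e).indicator fun _ ↦ f (e.1 / X, e.2 / X)) :=
    (integrable_indicator_iff (measurableSet_gridCell X e)).2
      (integrableOn_const (by simp [volume_gridCell hX e]))
  simp only [comp_gridCorner_eq_sum hf hX]
  rw [integral_finsetSum _ fun e _ ↦ integrable e, riemannSum, Finset.mul_sum]
  refine Finset.sum_congr rfl fun e _ ↦ ?_
  rw [integral_indicator_const _ (measurableSet_gridCell X e), measureReal_def,
    volume_gridCell hX, ENNReal.toReal_ofReal (by positivity), smul_eq_mul]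

lemma measurableSet_fareyTriangle : MeasurableSet fareyTriangle :=
  (measurableSet_le measurable_fst measurable_const).inter
    ((measurableSet_le measurable_snd measurable_const).inter
      (measurableSet_lt measurable_const (measurable_fst.add measurable_snd)))

lemma measurable_gapKernel (c : ℝ) : Measurable (gapKernel c) :=
  Measurable.indicator (by fun_prop) measurableSet_fareyTriangle

lemma fareyTriangle_subset : fareyTriangle ⊆ Set.Ioc 0 1 ×ˢ Set.Ioc 0 1 := by
  rintro z ⟨h₁, h₂, h₃⟩
  exact ⟨⟨by linarith, h₁⟩, by linarith, h₂⟩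

lemma support_gapKernel_subset (c : ℝ) :
    Function.support (gapKernel c) ⊆ Set.Ioc 0 1 ×ˢ Set.Ioc 0 1 :=
  Set.support_indicator_subset.trans fareyTriangle_subset

lemma continuousAt_gapKernel (c : ℝ) {z : ℝ × ℝ} (h₁ : z.1 ≠ 1) (h₂ : z.2 ≠ 1)
    (h₃ : z.1 + z.2 ≠ 1) : ContinuousAt (gapKernel c) z := by
  have tendsto₁ : Tendsto Prod.fst (𝓝 z) (𝓝 z.1) := continuousAt_fst
  have tendsto₂ : Tendsto Prod.snd (𝓝 z) (𝓝 z.2) := continuousAt_snd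
  have tendsto₃ : Tendsto (fun w : ℝ × ℝ ↦ w.1 + w.2) (𝓝 z) (𝓝 (z.1 + z.2)) :=
    tendsto₁.add tendsto₂
  by_cases hz : z ∈ fareyTriangle
  · obtain ⟨⟨pos₁, le₁⟩, pos₂, le₂⟩ := fareyTriangle_subset hz
    have formula : gapKernel c =ᶠ[𝓝 z] fun w ↦ max 0 (1 / (w.1 * w.2) - c) := by
      filter_upwards [tendsto₁.eventually_lt_const (lt_of_le_of_ne le₁ h₁),
        tendsto₂.eventually_lt_const (lt_of_le_of_ne le₂ h₂),
        tendsto₃.eventually_const_lt hz.2.2] with w lt₁ lt₂ lt₃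
      exact Set.indicator_of_mem (show w ∈ fareyTriangle from ⟨lt₁.le, lt₂.le, lt₃⟩) _
    refine ContinuousAt.congr ?_ formula.symm
    have := (mul_pos pos₁ pos₂).ne'
    fun_prop (disch := assumption)
  · have eventually_notMem : ∀ᶠ w in 𝓝 z, w ∉ fareyTriangle := by
      have outside : 1 < z.1 ∨ 1 < z.2 ∨ z.1 + z.2 < 1 := by
        by_contra! inside
        exact hz ⟨inside.1, inside.2.1, lt_of_le_of_ne inside.2.2 h₃.symm⟩
      rcases outside with h | h | h
      · exact (tendsto₁.eventually_const_lt h).mono fun w hw hw' ↦ hw.not_ge hw'.1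
      · exact (tendsto₂.eventually_const_lt h).mono fun w hw hw' ↦ hw.not_ge hw'.2.1
      · exact (tendsto₃.eventually_lt_const h).mono fun w hw hw' ↦ hw.not_gt hw'.2.2
    exact continuousAt_const.congr
      (eventually_notMem.mono fun w hw ↦ (Set.indicator_of_notMem hw _).symm)

lemma ae_ne_and_add_ne (a b c : ℝ) : ∀ᵐ z : ℝ × ℝ, z.1 ≠ a ∧ z.2 ≠ b ∧ z.1 + z.2 ≠ c := by
  rw [Measure.volume_eq_prod]
  refine (Measure.quasiMeasurePreserving_fst.ae (Measure.ae_ne volume a)).and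
    ((Measure.quasiMeasurePreserving_snd.ae (Measure.ae_ne volume b)).and ?_)
  have measurable_ne : MeasurableSet {z : ℝ × ℝ | z.1 + z.2 ≠ c} :=
    (measurableSet_eq_fun (measurable_fst.add measurable_snd) measurable_const).compl
  refine (Measure.ae_prod_iff_ae_ae measurable_ne).2 (ae_of_all _ fun u ↦ ?_)
  filter_upwards [Measure.ae_ne volume (c - u)] with v hv h
  exact hv (eq_sub_of_add_eq' h)

/-- The function `1 / √s` cut off to the unit interval. -/
noncomputable def invSqrt : ℝ → ℝ := (Set.Ioc 0 1).indicator fun s ↦ (√s)⁻¹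

/-- An integrable majorant of all the step functions `gapKernel c ∘ gridCorner X`. -/
noncomputable def gapMajorant (z : ℝ × ℝ) : ℝ :=
  2 * (invSqrt z.1 * invSqrt (1 - z.2) + invSqrt (1 - z.1) * invSqrt z.2)

lemma invSqrt_nonneg (s : ℝ) : 0 ≤ invSqrt s :=
  Set.indicator_nonneg (fun _ _ ↦ by positivity) s

lemma integrable_invSqrt : Integrable invSqrt := by
  refine (integrable_indicator_iff measurableSet_Ioc).2 ?_
  have rpow_integrable := intervalIntegral.intervalIntegrable_rpow' (a := 0) (b := 1)
    (r := -(1 / 2)) (by norm_num)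
  rw [intervalIntegrable_iff_integrableOn_Ioc_of_le zero_le_one] at rpow_integrable
  refine rpow_integrable.congr_fun (fun s hs ↦ ?_) measurableSet_Ioc
  simp only [Real.rpow_neg hs.1.le, Real.sqrt_eq_rpow]

lemma gapMajorant_nonneg (z : ℝ × ℝ) : 0 ≤ gapMajorant z :=
  mul_nonneg zero_le_two (add_nonneg (mul_nonneg (invSqrt_nonneg _) (invSqrt_nonneg _))
    (mul_nonneg (invSqrt_nonneg _) (invSqrt_nonneg _)))

lemma integrable_gapMajorant : Integrable gapMajorant := by
  have reflected := integrable_invSqrt.comp_sub_left 1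
  exact ((integrable_invSqrt.mul_prod reflected).add
    (reflected.mul_prod integrable_invSqrt)).const_mul 2

lemma inv_le_two_mul_invSqrt_mul_invSqrt {a u w : ℝ} (hu : u ∈ Set.Ioc 0 1)
    (hw : w ∈ Set.Ioc 0 1) (hua : u ≤ a) (hwa : w ≤ 2 * a) :
    1 / a ≤ 2 * (invSqrt u * invSqrt w) := by
  have ha : 0 < a := hu.1.trans_le hua
  have sqrt_le : √(u * w) ≤ 2 * a :=
    (Real.sqrt_le_left (by positivity)).2 (by nlinarith [mul_le_mul hua hwa hw.1.le ha.le])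
  rw [invSqrt, Set.indicator_of_mem hu, Set.indicator_of_mem hw, ← mul_inv,
    ← Real.sqrt_mul hu.1.le, ← div_eq_mul_inv,
    div_le_div_iff₀ ha (Real.sqrt_pos.2 (mul_pos hu.1 hw.1)), one_mul]
  exact sqrt_le

lemma gapKernel_gridCorner_le {c X : ℝ} (hc : 0 ≤ c) (hX : 0 < X) {z : ℝ × ℝ} (h₁ : z.1 ≠ 1)
    (h₂ : z.2 ≠ 1) : ‖gapKernel c (gridCorner X z)‖ ≤ gapMajorant z := by
  by_cases hz : gridCorner X z ∈ fareyTriangle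
  swap
  · rw [gapKernel, Set.indicator_of_notMem hz, norm_zero]
    exact gapMajorant_nonneg z
  obtain ⟨⟨pos₁, le₁⟩, pos₂, le₂⟩ := fareyTriangle_subset hz
  have corner_bounds {u : ℝ} (pos : 0 < ⌈u * X⌉ / X) (le : ⌈u * X⌉ / X ≤ 1) (ne : u ≠ 1) :
      0 < u ∧ u < 1 ∧ 1 / X ≤ ⌈u * X⌉ / X := by
    have one_le : (1 : ℝ) ≤ ⌈u * X⌉ :=
      Int.cast_one_le_of_pos (Int.cast_pos.1 ((div_pos_iff_of_pos_right hX).1 pos))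
    have mesh_le : 1 / X ≤ ⌈u * X⌉ / X := by gcongr
    exact ⟨by linarith [ceil_mul_div_lt hX u],
      lt_of_le_of_ne ((le_ceil_mul_div hX u).trans le) ne, mesh_le⟩
  obtain ⟨u_pos, u_lt, mesh_le₁⟩ := corner_bounds pos₁ le₁ h₁
  obtain ⟨v_pos, v_lt, mesh_le₂⟩ := corner_bounds pos₂ le₂ h₂
  have lt_add₁ := ceil_mul_div_lt hX z.1
  have lt_add₂ := ceil_mul_div_lt hX z.2
  rw [gapKernel, Set.indicator_of_mem hz, Real.norm_of_nonneg (le_max_left _ _), gapMajorant]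
  have one_lt := hz.2.2
  simp only [gridCorner] at pos₁ pos₂ one_lt ⊢
  have bound₁ := inv_le_two_mul_invSqrt_mul_invSqrt ⟨u_pos, u_lt.le⟩
    (w := 1 - z.2) ⟨by linarith, by linarith⟩ (le_ceil_mul_div hX z.1) (by linarith)
  have bound₂ := inv_le_two_mul_invSqrt_mul_invSqrt ⟨v_pos, v_lt.le⟩
    (w := 1 - z.1) ⟨by linarith, by linarith⟩ (le_ceil_mul_div hX z.2) (by linarith)
  set a : ℝ := ⌈z.1 * X⌉ / X
  set b : ℝ := ⌈z.2 * X⌉ / X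
  refine max_le (gapMajorant_nonneg z) ?_
  calc 1 / (a * b) - c ≤ 1 / (a * b) * 1 := by linarith
    _ ≤ 1 / (a * b) * (a + b) := by gcongr
    _ = 1 / a + 1 / b := by field_simp; ring
    _ ≤ _ := by linarith

lemma tendsto_riemannSum_gapKernel {c : ℝ} (hc : 0 ≤ c) :
    Tendsto (riemannSum (gapKernel c)) atTop (𝓝 (∫ z, gapKernel c z)) := by
  have tendsto_integral : Tendsto (fun X ↦ ∫ z, gapKernel c (gridCorner X z)) atTop
      (𝓝 (∫ z, gapKernel c z)) := by
    refine tendsto_integral_filter_of_dominated_convergence gapMajorant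
      (Eventually.of_forall fun X ↦
        ((measurable_gapKernel c).comp (measurable_gridCorner X)).aestronglyMeasurable) ?_
      integrable_gapMajorant ?_
    · filter_upwards [eventually_gt_atTop 0] with X hX
      filter_upwards [ae_ne_and_add_ne 1 1 1] with z hz
      exact gapKernel_gridCorner_le hc hX hz.1 hz.2.1
    · filter_upwards [ae_ne_and_add_ne 1 1 1] with z hz
      exact (continuousAt_gapKernel c hz.1 hz.2.1 hz.2.2).tendsto.comp (tendsto_gridCorner z)
  refine tendsto_integral.congr' ?_
  filter_upwards [eventually_gt_atTop 0] with X hX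
  exact integral_comp_gridCorner (support_gapKernel_subset c) hX

lemma abs_riemannSum_gapKernel_le {c X : ℝ} (hc : 0 ≤ c) (hX : 0 < X) :
    |riemannSum (gapKernel c) X| ≤ ∫ z, gapMajorant z := by
  rw [← integral_comp_gridCorner (support_gapKernel_subset c) hX, ← Real.norm_eq_abs]
  refine norm_integral_le_of_norm_le integrable_gapMajorant ?_
  filter_upwards [ae_ne_and_add_ne 1 1 1] with z hz
  exact gapKernel_gridCorner_le hc hX hz.1 hz.2.1

lemma sum_moebius_dvd {N m n : ℕ} (hm : m ∈ Finset.Icc 1 N) :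
    ∑ d ∈ Finset.Icc 1 N with d ∣ m ∧ d ∣ n, ArithmeticFunction.moebius d =
      if m.Coprime n then 1 else 0 := by
  rw [Finset.mem_Icc] at hm
  have common_divisors : {d ∈ Finset.Icc 1 N | d ∣ m ∧ d ∣ n} = (m.gcd n).divisors := by
    ext d
    rw [Finset.mem_filter, Finset.mem_Icc, Nat.mem_divisors, Nat.dvd_gcd_iff]
    constructor
    · exact fun h ↦ ⟨h.2, (Nat.gcd_pos_of_pos_left n hm.1).ne'⟩
    · rintro ⟨h, -⟩
      exact ⟨⟨Nat.pos_of_dvd_of_pos h.1 hm.1, (Nat.le_of_dvd hm.1 h.1).trans hm.2⟩, h⟩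
  rw [common_divisors, ← ArithmeticFunction.coe_mul_zeta_apply,
    ArithmeticFunction.moebius_mul_coe_zeta, ArithmeticFunction.one_apply]

lemma sum_dvd_eq_sum_mul {M : Type*} [AddCommMonoid M] (N : ℕ) {d : ℕ} (hd : 0 < d)
    (f : ℕ × ℕ → M) :
    ∑ e ∈ Finset.Icc 1 N ×ˢ Finset.Icc 1 N with d ∣ e.1 ∧ d ∣ e.2, f e =
      ∑ e ∈ Finset.Icc 1 (N / d) ×ˢ Finset.Icc 1 (N / d), f (d * e.1, d * e.2) := by
  have pos_mul_iff (m : ℕ) : 1 ≤ d * m ↔ 1 ≤ m := mul_pos_iff_of_pos_left hd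
  symm
  refine Finset.sum_nbij (fun e ↦ (d * e.1, d * e.2)) ?_ ?_ ?_ fun _ _ ↦ rfl
  · intro e he
    simp_all [Nat.le_div_iff_mul_le hd, mul_comm d, Nat.one_le_iff_ne_zero, hd.ne']
  · intro e _ e' _ h
    simpa [Prod.ext_iff, hd.ne'] using h
  · rintro ⟨_, _⟩ h
    obtain ⟨h, ⟨m, rfl⟩, n, rfl⟩ := Finset.mem_filter.1 h
    refine ⟨(m, n), ?_, rfl⟩
    simp_all [Nat.le_div_iff_mul_le hd, mul_comm d]

lemma sum_coprime_eq_sum_moebius {R : Type*} [Ring R] (N : ℕ) (f : ℕ × ℕ → R) :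
    ∑ e ∈ Finset.Icc 1 N ×ˢ Finset.Icc 1 N with e.1.Coprime e.2, f e =
      ∑ d ∈ Finset.Icc 1 N, (ArithmeticFunction.moebius d : R) *
        ∑ e ∈ Finset.Icc 1 (N / d) ×ˢ Finset.Icc 1 (N / d), f (d * e.1, d * e.2) := by
  calc ∑ e ∈ Finset.Icc 1 N ×ˢ Finset.Icc 1 N with e.1.Coprime e.2, f e
    _ = ∑ e ∈ Finset.Icc 1 N ×ˢ Finset.Icc 1 N, ∑ d ∈ Finset.Icc 1 N,
          if d ∣ e.1 ∧ d ∣ e.2 then (ArithmeticFunction.moebius d : R) * f e else 0 := by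
      rw [Finset.sum_filter]
      refine Finset.sum_congr rfl fun e he ↦ ?_
      have moebius_sum := congrArg (Int.cast (R := R))
        (sum_moebius_dvd (n := e.2) (Finset.mem_product.1 he).1)
      push_cast at moebius_sum
      rw [← Finset.sum_filter, ← Finset.sum_mul, moebius_sum, ite_mul, one_mul, zero_mul]
    _ = _ := by
      rw [Finset.sum_comm]
      refine Finset.sum_congr rfl fun d hd ↦ ?_
      rw [← Finset.sum_filter, sum_dvd_eq_sum_mul N (Finset.mem_Icc.1 hd).1, Finset.mul_sum]

lemma tsum_moebius_div_sq :
    ∑' d : ℕ, (ArithmeticFunction.moebius d : ℝ) / (d : ℝ) ^ 2 = 6 / Real.pi ^ 2 := by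
  have moebius_LSeries : LSeries (fun n ↦ (ArithmeticFunction.moebius n : ℂ)) 2 =
      ((∑' d : ℕ, (ArithmeticFunction.moebius d : ℝ) / (d : ℝ) ^ 2 : ℝ) : ℂ) := by
    rw [LSeries, Complex.ofReal_tsum]
    refine tsum_congr fun d ↦ ?_
    rcases eq_or_ne d 0 with rfl | hd
    · simp
    · simp [LSeries.term_of_ne_zero hd]
  have zeta_mul := ArithmeticFunction.LSeries_zeta_mul_Lseries_moebius (s := 2) (by norm_num)
  rw [ArithmeticFunction.LSeries_zeta_eq_riemannZeta (by norm_num), riemannZeta_two,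
    moebius_LSeries] at zeta_mul
  rw [eq_div_iff (by positivity), mul_comm, ← div_eq_one_iff_eq (by norm_num), mul_div_right_comm]
  exact_mod_cast zeta_mul

lemma gapWeight_eq_gapKernel {T : ℝ} (hT : 0 < T) (c : ℝ) {e : ℕ × ℕ}
    (he : ((e.1 : ℝ) / T, (e.2 : ℝ) / T) ∈ fareyTriangle) :
    gapWeight (c / T ^ 2) e = (T ^ 2)⁻¹ * gapKernel c (e.1 / T, e.2 / T) := by
  rw [gapKernel, Set.indicator_of_mem he, gapWeight, mul_max_of_nonneg _ _ (by positivity),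
    mul_zero]
  congr 1
  obtain ⟨⟨pos₁, -⟩, pos₂, -⟩ := fareyTriangle_subset he
  have pos₁ : (0 : ℝ) < e.1 := (div_pos_iff_of_pos_right hT).1 pos₁
  have pos₂ : (0 : ℝ) < e.2 := (div_pos_iff_of_pos_right hT).1 pos₂
  field_simp

lemma sum_gapWeight_eq_sum_gapKernel {T : ℝ} (hT : 0 < T) (c : ℝ) :
    ∑ x ∈ fareyPairs ⌊T⌋₊, gapWeight (c / T ^ 2) x =
      ∑ e ∈ Finset.Icc 1 ⌊T⌋₊ ×ˢ Finset.Icc 1 ⌊T⌋₊ with e.1.Coprime e.2,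
        (T ^ 2)⁻¹ * gapKernel c (e.1 / T, e.2 / T) := by
  have mem_triangle_iff {e : ℕ × ℕ} (he : e ∈ Finset.Icc 1 ⌊T⌋₊ ×ˢ Finset.Icc 1 ⌊T⌋₊) :
      ((e.1 : ℝ) / T, (e.2 : ℝ) / T) ∈ fareyTriangle ↔ ⌊T⌋₊ < e.1 + e.2 := by
    rw [Finset.mem_product, Finset.mem_Icc, Finset.mem_Icc, Nat.le_floor_iff hT.le,
      Nat.le_floor_iff hT.le] at he
    simp only [fareyTriangle, Set.mem_ofPred_eq, div_le_one hT, he.1.2, he.2.2, true_and,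
      ← add_div, one_lt_div hT, Nat.floor_lt hT.le, Nat.cast_add]
  have subset : fareyPairs ⌊T⌋₊ ⊆
      {e ∈ Finset.Icc 1 ⌊T⌋₊ ×ˢ Finset.Icc 1 ⌊T⌋₊ | e.1.Coprime e.2} :=
    Finset.monotone_filter_right _ fun _ _ h ↦ h.2
  rw [← Finset.sum_subset subset]
  · refine Finset.sum_congr rfl fun e he ↦ gapWeight_eq_gapKernel hT c ?_
    exact (mem_triangle_iff (Finset.mem_filter.1 he).1).2 (Finset.mem_filter.1 he).2.1
  · intro e he notMem
    obtain ⟨mem, coprime⟩ := Finset.mem_filter.1 he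
    rw [gapKernel, Set.indicator_of_notMem, mul_zero]
    exact fun h ↦ notMem (Finset.mem_filter.2 ⟨mem, (mem_triangle_iff mem).1 h, coprime⟩)

lemma sum_gapWeight_eq_sum_moebius {T : ℝ} (hT : 0 < T) (c : ℝ) :
    ∑ x ∈ fareyPairs ⌊T⌋₊, gapWeight (c / T ^ 2) x = ∑ d ∈ Finset.Icc 1 ⌊T⌋₊,
      (ArithmeticFunction.moebius d : ℝ) / (d : ℝ) ^ 2 * riemannSum (gapKernel c) (T / d) := by
  rw [sum_gapWeight_eq_sum_gapKernel hT, sum_coprime_eq_sum_moebius]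
  refine Finset.sum_congr rfl fun d hd ↦ ?_
  have hd : (0 : ℝ) < d := by exact_mod_cast (Finset.mem_Icc.1 hd).1
  have cancel (m : ℕ) : ((d * m : ℕ) : ℝ) / T = m / (T / d) := by
    push_cast
    field_simp
  simp only [cancel]
  rw [riemannSum, ← Nat.floor_div_natCast, ← Finset.mul_sum]
  field_simp

lemma riemannSum_of_lt_one (f : ℝ × ℝ → ℝ) {X : ℝ} (hX : X < 1) : riemannSum f X = 0 := by
  rw [riemannSum, Nat.floor_eq_zero.2 hX]
  simp

lemma sum_gapWeight_eq_tsum_moebius {T : ℝ} (hT : 0 < T) (c : ℝ) :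
    ∑ x ∈ fareyPairs ⌊T⌋₊, gapWeight (c / T ^ 2) x = ∑' d : ℕ,
      (ArithmeticFunction.moebius d : ℝ) / (d : ℝ) ^ 2 * riemannSum (gapKernel c) (T / d) := by
  rw [sum_gapWeight_eq_sum_moebius hT]
  refine (tsum_eq_sum fun d hd ↦ ?_).symm
  rcases d.eq_zero_or_pos with rfl | pos
  · simp
  · have lt : T < d := (Nat.floor_lt hT.le).1 (by simpa [Nat.one_le_iff_ne_zero, pos.ne'] using hd)
    rw [riemannSum_of_lt_one _ ((div_lt_one (Nat.cast_pos.2 pos)).2 lt), mul_zero]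

lemma tendsto_sum_gapWeight {c : ℝ} (hc : 0 ≤ c) :
    Tendsto (fun T : ℝ ↦ ∑ x ∈ fareyPairs ⌊T⌋₊, gapWeight (c / T ^ 2) x) atTop
      (𝓝 (6 / Real.pi ^ 2 * ∫ z, gapKernel c z)) := by
  rw [← tsum_moebius_div_sq, ← tsum_mul_right]
  have tendsto_tsum : Tendsto (fun T : ℝ ↦ ∑' d : ℕ,
      (ArithmeticFunction.moebius d : ℝ) / (d : ℝ) ^ 2 * riemannSum (gapKernel c) (T / d)) atTop
      (𝓝 (∑' d : ℕ, (ArithmeticFunction.moebius d : ℝ) / (d : ℝ) ^ 2 * ∫ z, gapKernel c z)) := by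
    refine tendsto_tsum_of_dominated_convergence
      (bound := fun d : ℕ ↦ 1 / (d : ℝ) ^ 2 * ∫ z, gapMajorant z)
      ((Real.summable_one_div_nat_pow.2 one_lt_two).mul_right _) (fun d ↦ ?_) ?_
    · rcases d.eq_zero_or_pos with rfl | hd
      · simp
      · exact ((tendsto_riemannSum_gapKernel hc).comp
          (tendsto_id.atTop_div_const (Nat.cast_pos.2 hd))).const_mul _
    · filter_upwards [eventually_gt_atTop 0] with T hT d
      rcases d.eq_zero_or_pos with rfl | hd
      · simp
      have hd : (0 : ℝ) < d := Nat.cast_pos.2 hd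
      have moebius_le : |(ArithmeticFunction.moebius d : ℝ)| ≤ 1 := by
        exact_mod_cast ArithmeticFunction.abs_moebius_le_one
      rw [norm_mul, Real.norm_eq_abs, Real.norm_eq_abs, abs_div, abs_of_pos (pow_pos hd 2)]
      gcongr
      exact abs_riemannSum_gapKernel_le hc (by positivity)
  refine tendsto_tsum.congr' ?_
  filter_upwards [eventually_gt_atTop 0] with T hT
  exact (sum_gapWeight_eq_tsum_moebius hT c).symm

/-! ### The limit density -/

/-- The part of the Farey triangle under the hyperbola `z.1 * z.2 = a`. -/
def hyperbolicRegion (a : ℝ) : Set (ℝ × ℝ) := {z ∈ fareyTriangle | z.1 * z.2 ≤ a}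

/-- The length of the slice of `hyperbolicRegion a` at first coordinate `u`. -/
noncomputable def sliceLength (a u : ℝ) : ℝ := max 0 (min 1 (a / u) - (1 - u))

lemma sliceLength_nonneg (a u : ℝ) : 0 ≤ sliceLength a u := le_max_left _ _

lemma sliceLength_of_le {a u : ℝ} (hu : 0 < u) (hua : u ≤ a) : sliceLength a u = u := by
  rw [sliceLength, min_eq_left ((one_le_div hu).2 hua), sub_sub_cancel, max_eq_right hu.le]

lemma div_sub_one_sub {a u : ℝ} (hu : 0 < u) : a / u - (1 - u) = (u ^ 2 - u + a) / u := by
  field_simp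
  ring

lemma sliceLength_of_nonneg {a u : ℝ} (hu : 0 < u) (hau : a ≤ u) (h : 0 ≤ u ^ 2 - u + a) :
    sliceLength a u = a / u - 1 + u := by
  rw [sliceLength, min_eq_right ((div_le_one hu).2 hau), max_eq_right]
  · ring
  · rw [div_sub_one_sub hu]
    positivity

lemma sliceLength_of_nonpos {a u : ℝ} (hu : 0 < u) (h : u ^ 2 - u + a ≤ 0) :
    sliceLength a u = 0 := by
  refine max_eq_left ((sub_le_sub_right (min_le_right _ _) _).trans ?_)
  rw [div_sub_one_sub hu]
  exact div_nonpos_of_nonpos_of_nonneg h hu.le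

lemma intervalIntegrable_sliceLength (a : ℝ) {x y : ℝ} (hx : x ∈ Set.Icc 0 1)
    (hy : y ∈ Set.Icc 0 1) : IntervalIntegrable (sliceLength a) volume x y := by
  have unit_interval : IntegrableOn (sliceLength a) (Set.Icc 0 1) := by
    refine Measure.integrableOn_of_bounded (M := 1) (by simp)
      (by unfold sliceLength; fun_prop) ?_
    filter_upwards [ae_restrict_mem measurableSet_Icc] with u hu
    rw [Real.norm_of_nonneg (sliceLength_nonneg a u)]
    exact max_le zero_le_one (by linarith [min_le_left 1 (a / u), hu.2])
  exact (unit_interval.mono_set (Set.uIcc_subset_Icc hx hy)).intervalIntegrable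

lemma integral_sliceLength_of_le {a x : ℝ} (hx : 0 ≤ x) (hxa : x ≤ a) :
    ∫ u in (0 : ℝ)..x, sliceLength a u = x ^ 2 / 2 := by
  rw [intervalIntegral.integral_congr_ae (g := fun u ↦ u) (ae_of_all _ fun u hu ↦ ?_), integral_id]
  · ring
  · rw [Set.uIoc_of_le hx] at hu
    exact sliceLength_of_le hu.1 (hu.2.trans hxa)

lemma integral_sliceLength_of_nonneg {a x y : ℝ} (hx : 0 < x) (hxy : x ≤ y) (hax : a ≤ x)
    (h : ∀ u ∈ Set.Icc x y, 0 ≤ u ^ 2 - u + a) :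
    ∫ u in x..y, sliceLength a u = a * Real.log (y / x) - (y - x) + (y ^ 2 - x ^ 2) / 2 := by
  have pos {u : ℝ} (hu : u ∈ Set.uIcc x y) : 0 < u := by
    rw [Set.uIcc_of_le hxy] at hu
    exact hx.trans_le hu.1
  have antideriv (u : ℝ) (hu : u ∈ Set.uIcc x y) :
      HasDerivAt (fun u ↦ a * Real.log u - u + u ^ 2 / 2) (a / u - 1 + u) u := by
    refine ((((Real.hasDerivAt_log (pos hu).ne').const_mul a).sub (hasDerivAt_id u)).add
      ((hasDerivAt_pow 2 u).div_const 2)).congr_deriv ?_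
    simp [div_eq_mul_inv, mul_assoc, mul_comm u]
  have continuousOn : ContinuousOn (fun u ↦ a / u - 1 + u) (Set.uIcc x y) := fun u hu ↦ by
    have := (pos hu).ne'
    exact ContinuousAt.continuousWithinAt (by fun_prop (disch := assumption))
  rw [intervalIntegral.integral_congr (g := fun u ↦ a / u - 1 + u) fun u hu ↦ ?_,
    intervalIntegral.integral_eq_sub_of_hasDerivAt antideriv continuousOn.intervalIntegrable,
    Real.log_div (hx.trans_le hxy).ne' hx.ne']
  · ring
  · have mem := hu
    rw [Set.uIcc_of_le hxy] at mem
    exact sliceLength_of_nonneg (pos hu) (hax.trans mem.1) (h u mem)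

lemma integral_sliceLength_of_nonpos {a x y : ℝ} (hx : 0 < x) (hxy : x ≤ y)
    (h : ∀ u ∈ Set.Icc x y, u ^ 2 - u + a ≤ 0) : ∫ u in x..y, sliceLength a u = 0 := by
  rw [intervalIntegral.integral_congr (g := fun _ ↦ 0) fun u hu ↦ ?_,
    intervalIntegral.integral_zero]
  rw [Set.uIcc_of_le hxy] at hu
  exact sliceLength_of_nonpos (hx.trans_le hu.1) (h u hu)

lemma measurableSet_hyperbolicRegion (a : ℝ) : MeasurableSet (hyperbolicRegion a) :=
  measurableSet_fareyTriangle.inter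
    (measurableSet_le (measurable_fst.mul measurable_snd) measurable_const)

lemma hyperbolicRegion_slice (a u : ℝ) : volume (Prod.mk u ⁻¹' hyperbolicRegion a) =
    (Set.Ioc 0 1).indicator (fun u ↦ ENNReal.ofReal (sliceLength a u)) u := by
  by_cases hu : u ∈ Set.Ioc 0 1
  · have slice_eq : Prod.mk u ⁻¹' hyperbolicRegion a = Set.Ioc (1 - u) (min 1 (a / u)) := by
      ext v
      simp only [hyperbolicRegion, fareyTriangle, Set.mem_preimage, Set.mem_ofPred_eq, Set.mem_Ioc,
        le_min_iff, le_div_iff₀ hu.1, hu.2, true_and, sub_lt_iff_lt_add', mul_comm v u]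
      tauto
    rw [Set.indicator_of_mem hu, slice_eq, Real.volume_Ioc, sliceLength, ENNReal.ofReal_max,
      ENNReal.ofReal_zero, max_eq_right zero_le]
  · have slice_eq : Prod.mk u ⁻¹' hyperbolicRegion a = ∅ :=
      Set.eq_empty_of_forall_notMem fun v hv ↦ hu (fareyTriangle_subset hv.1).1
    rw [Set.indicator_of_notMem hu, slice_eq, measure_empty]

lemma volume_hyperbolicRegion (a : ℝ) :
    volume (hyperbolicRegion a) = ENNReal.ofReal (∫ u in (0 : ℝ)..1, sliceLength a u) := by
  have integrable := intervalIntegrable_sliceLength a (x := 0) (y := 1) (by simp) (by simp)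
  rw [intervalIntegrable_iff_integrableOn_Ioc_of_le zero_le_one] at integrable
  rw [Measure.volume_eq_prod, Measure.prod_apply (measurableSet_hyperbolicRegion a)]
  simp only [hyperbolicRegion_slice]
  rw [lintegral_indicator measurableSet_Ioc, intervalIntegral.integral_of_le zero_le_one,
    ofReal_integral_eq_lintegral_ofReal integrable (ae_of_all _ fun u ↦ sliceLength_nonneg a u)]

lemma volume_real_hyperbolicRegion (a : ℝ) :
    volume.real (hyperbolicRegion a) = ∫ u in (0 : ℝ)..1, sliceLength a u := by
  rw [measureReal_def, volume_hyperbolicRegion, ENNReal.toReal_ofReal]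
  exact intervalIntegral.integral_nonneg zero_le_one fun u _ ↦ sliceLength_nonneg a u

lemma volume_real_hyperbolicRegion_of_one_le {a : ℝ} (ha : 1 ≤ a) :
    volume.real (hyperbolicRegion a) = 1 / 2 := by
  rw [volume_real_hyperbolicRegion, integral_sliceLength_of_le zero_le_one ha]
  norm_num

lemma volume_real_hyperbolicRegion_of_quarter_le {a : ℝ} (ha : 1 / 4 ≤ a) (ha' : a ≤ 1) :
    volume.real (hyperbolicRegion a) = -1 / 2 + a - a * Real.log a := by
  have pos : 0 < a := by linarith
  have mem : a ∈ Set.Icc 0 1 := ⟨pos.le, ha'⟩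
  rw [volume_real_hyperbolicRegion, ← intervalIntegral.integral_add_adjacent_intervals
    (intervalIntegrable_sliceLength a (by simp) mem)
    (intervalIntegrable_sliceLength a mem (by simp)), integral_sliceLength_of_le pos.le le_rfl,
    integral_sliceLength_of_nonneg pos ha' le_rfl fun u _ ↦ by nlinarith [sq_nonneg (u - 1 / 2)],
    one_div, Real.log_inv]
  ring

lemma volume_real_hyperbolicRegion_of_le_quarter {a : ℝ} (pos : 0 < a) (ha : a ≤ 1 / 4) :
    volume.real (hyperbolicRegion a) =
      -1 / 2 + a + √(1 / 4 - a) - 2 * a * Real.log (1 / 2 + √(1 / 4 - a)) := by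
  set r := √(1 / 4 - a)
  have r_nonneg : 0 ≤ r := Real.sqrt_nonneg _
  have r_sq : r ^ 2 = 1 / 4 - a := Real.sq_sqrt (by linarith)
  have r_lt : r < 1 / 2 := by nlinarith
  have factor (u : ℝ) : u ^ 2 - u + a = (u - (1 / 2 - r)) * (u - (1 / 2 + r)) := by
    linear_combination r_sq
  have a_le : a ≤ 1 / 2 - r := by nlinarith
  have mem₁ : a ∈ Set.Icc 0 1 := ⟨pos.le, by linarith⟩
  have mem₂ : 1 / 2 - r ∈ Set.Icc 0 1 := ⟨by linarith, by linarith⟩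
  have mem₃ : 1 / 2 + r ∈ Set.Icc 0 1 := ⟨by linarith, by linarith⟩
  have integrable {x y : ℝ} := intervalIntegrable_sliceLength a (x := x) (y := y)
  have before_roots := integral_sliceLength_of_nonneg pos a_le le_rfl fun u hu ↦ by
    rw [factor]
    exact mul_nonneg_of_nonpos_of_nonpos (by linarith [hu.2]) (by linarith [hu.2])
  have between_roots := integral_sliceLength_of_nonpos (a := a) (x := 1 / 2 - r) (y := 1 / 2 + r)
      (by linarith) (by linarith) fun u hu ↦ by
    rw [factor]
    exact mul_nonpos_of_nonneg_of_nonpos (by linarith [hu.1]) (by linarith [hu.2])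
  have after_roots := integral_sliceLength_of_nonneg (a := a) (x := 1 / 2 + r) (y := 1)
      (by linarith) (by linarith) (by linarith) fun u hu ↦ by
    rw [factor]
    exact mul_nonneg (by linarith [hu.1]) (by linarith [hu.1])
  have root_ratio : (1 / 2 - r) / a = (1 / 2 + r)⁻¹ := by
    rw [div_eq_iff pos.ne', inv_mul_eq_div, eq_div_iff (by linarith)]
    linear_combination -r_sq
  rw [volume_real_hyperbolicRegion,
    ← intervalIntegral.integral_add_adjacent_intervals (integrable (by simp) mem₃)
      (integrable mem₃ (by simp)),
    ← intervalIntegral.integral_add_adjacent_intervals (integrable (by simp) mem₂)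
      (integrable mem₂ mem₃),
    ← intervalIntegral.integral_add_adjacent_intervals (integrable (by simp) mem₁)
      (integrable mem₁ mem₂), integral_sliceLength_of_le pos.le le_rfl, before_roots,
    between_roots, after_roots, root_ratio, one_div (1 / 2 + r), Real.log_inv]
  ring

lemma etaLog_eq (s : ℝ) : etaLog s = 6 / Real.pi ^ 2 *
    (2 * Real.exp (2 * s) * volume.real (hyperbolicRegion (Real.exp (-2 * s)))) := by
  have exp_mul_exp : Real.exp (2 * s) * Real.exp (-2 * s) = 1 := by
    rw [← Real.exp_add]
    simp
  have quarter_eq : (1 / 4 : ℝ) = Real.exp (-2 * Real.log 2) := by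
    rw [neg_mul, Real.exp_neg, two_mul, Real.exp_add, Real.exp_log two_pos]
    norm_num
  unfold etaLog
  split_ifs with nonpos le_log
  · rw [volume_real_hyperbolicRegion_of_one_le (Real.one_le_exp (by linarith))]
    ring
  · rw [volume_real_hyperbolicRegion_of_quarter_le, Real.log_exp]
    · linear_combination 6 / Real.pi ^ 2 * (-2 - 4 * s) * exp_mul_exp
    · rw [quarter_eq]
      exact Real.exp_le_exp.2 (by linarith)
    · exact Real.exp_le_one_iff.2 (by linarith)
  · rw [volume_real_hyperbolicRegion_of_le_quarter (Real.exp_pos _)]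
    · linear_combination 6 / Real.pi ^ 2 *
        (-2 + 4 * Real.log (1 / 2 + √(1 / 4 - Real.exp (-2 * s)))) * exp_mul_exp
    · rw [quarter_eq]
      exact Real.exp_le_exp.2 (by linarith)

lemma etaLog_nonneg (s : ℝ) : 0 ≤ etaLog s := by
  rw [etaLog_eq]
  positivity

lemma measurable_etaLog : Measurable etaLog :=
  Measurable.ite measurableSet_Iic (by fun_prop)
    (Measurable.ite measurableSet_Iic (by fun_prop) (by fun_prop))

lemma lintegral_two_mul_exp (a b : ℝ) :
    ∫⁻ s in Set.Ioc a b, ENNReal.ofReal (2 * Real.exp (2 * s)) =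
      ENNReal.ofReal (Real.exp (2 * b) - Real.exp (2 * a)) := by
  rcases le_total b a with hba | hab
  · rw [Set.Ioc_eq_empty hba.not_gt, setLIntegral_empty, ENNReal.ofReal_of_nonpos]
    exact sub_nonpos.2 (Real.exp_le_exp.2 (by linarith))
  have antideriv (s : ℝ) : HasDerivAt (fun s ↦ Real.exp (2 * s)) (2 * Real.exp (2 * s)) s := by
    simpa [mul_comm] using ((hasDerivAt_id s).const_mul 2).exp
  have integrable : IntervalIntegrable (fun s ↦ 2 * Real.exp (2 * s)) volume a b :=
    Continuous.intervalIntegrable (by fun_prop) a b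
  rw [← intervalIntegral.integral_eq_sub_of_hasDerivAt (fun s _ ↦ antideriv s) integrable,
    intervalIntegral.integral_of_le hab, ofReal_integral_eq_lintegral_ofReal
      ((intervalIntegrable_iff_integrableOn_Ioc_of_le hab).1 integrable)
      (ae_of_all _ fun s ↦ by positivity)]

lemma gapKernel_nonneg (c : ℝ) (z : ℝ × ℝ) : 0 ≤ gapKernel c z :=
  Set.indicator_nonneg (fun _ _ ↦ le_max_left _ _) z

lemma ofReal_gapKernel (L : ℝ) (z : ℝ × ℝ) : ENNReal.ofReal (gapKernel (Real.exp (2 * L)) z) =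
    ∫⁻ s in Set.Ioi L, (hyperbolicRegion (Real.exp (-2 * s))).indicator
      (fun _ ↦ ENNReal.ofReal (2 * Real.exp (2 * s))) z := by
  by_cases hz : z ∈ fareyTriangle
  swap
  · have notMem (s : ℝ) : z ∉ hyperbolicRegion (Real.exp (-2 * s)) := fun h ↦ hz h.1
    simp only [gapKernel, Set.indicator_of_notMem hz, Set.indicator_of_notMem (notMem _),
      lintegral_zero, ENNReal.ofReal_zero]
  have pos : 0 < z.1 * z.2 :=
    mul_pos (fareyTriangle_subset hz).1.1 (fareyTriangle_subset hz).2.1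
  set M := -Real.log (z.1 * z.2) / 2 with hM
  have exp_M : Real.exp (2 * M) = 1 / (z.1 * z.2) := by
    rw [hM, mul_div_cancel₀ _ two_ne_zero, Real.exp_neg, Real.exp_log pos, one_div]
  have mem_iff (s : ℝ) : z ∈ hyperbolicRegion (Real.exp (-2 * s)) ↔ s ∈ Set.Iic M := by
    rw [hyperbolicRegion, Set.mem_ofPred_eq, ← Real.log_le_iff_le_exp pos, Set.mem_Iic, hM,
      and_iff_right hz]
    constructor <;> intro h <;> linarith
  have integrand_eq (s : ℝ) : (hyperbolicRegion (Real.exp (-2 * s))).indicator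
      (fun _ ↦ ENNReal.ofReal (2 * Real.exp (2 * s))) z =
      (Set.Iic M).indicator (fun s ↦ ENNReal.ofReal (2 * Real.exp (2 * s))) s := by
    classical
    simp only [Set.indicator_apply, mem_iff]
  simp only [integrand_eq]
  rw [lintegral_indicator measurableSet_Iic, Measure.restrict_restrict measurableSet_Iic,
    Set.inter_comm, Set.Ioi_inter_Iic, lintegral_two_mul_exp, exp_M, gapKernel,
    Set.indicator_of_mem hz, ENNReal.ofReal_max, ENNReal.ofReal_zero, max_eq_right zero_le]

lemma ofReal_etaLog (s : ℝ) : ENNReal.ofReal (etaLog s) = ENNReal.ofReal (6 / Real.pi ^ 2) *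
    ∫⁻ z, (hyperbolicRegion (Real.exp (-2 * s))).indicator
      (fun _ ↦ ENNReal.ofReal (2 * Real.exp (2 * s))) z := by
  have finite : volume (hyperbolicRegion (Real.exp (-2 * s))) ≠ ⊤ := by
    simp [volume_hyperbolicRegion]
  have exp_nonneg : 0 ≤ 2 * Real.exp (2 * s) := by positivity
  rw [lintegral_indicator_const (measurableSet_hyperbolicRegion _), etaLog_eq,
    ENNReal.ofReal_mul (by positivity), ENNReal.ofReal_mul exp_nonneg, ofReal_measureReal finite]

lemma measurable_indicator_hyperbolicRegion : Measurable fun p : (ℝ × ℝ) × ℝ ↦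
    (hyperbolicRegion (Real.exp (-2 * p.2))).indicator
      (fun _ ↦ ENNReal.ofReal (2 * Real.exp (2 * p.2))) p.1 := by
  have measurableSet_mem :
      MeasurableSet {p : (ℝ × ℝ) × ℝ | p.1 ∈ hyperbolicRegion (Real.exp (-2 * p.2))} :=
    (measurable_fst measurableSet_fareyTriangle).inter
      (measurableSet_le (f := fun p : (ℝ × ℝ) × ℝ ↦ p.1.1 * p.1.2)
        (g := fun p ↦ Real.exp (-2 * p.2)) (by fun_prop) (by fun_prop))
  exact Measurable.indicator (f := fun p : (ℝ × ℝ) × ℝ ↦ ENNReal.ofReal (2 * Real.exp (2 * p.2)))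
    (by fun_prop) measurableSet_mem

lemma integral_gapKernel_eq_integral_etaLog (L : ℝ) :
    6 / Real.pi ^ 2 * ∫ z, gapKernel (Real.exp (2 * L)) z = ∫ s in Set.Ioi L, etaLog s := by
  rw [integral_eq_lintegral_of_nonneg_ae (ae_of_all _ (gapKernel_nonneg _))
      (measurable_gapKernel _).aestronglyMeasurable,
    integral_eq_lintegral_of_nonneg_ae (ae_of_all _ etaLog_nonneg)
      measurable_etaLog.aestronglyMeasurable]
  simp only [ofReal_gapKernel]
  rw [lintegral_lintegral_swap measurable_indicator_hyperbolicRegion.aemeasurable]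
  simp only [ofReal_etaLog]
  rw [lintegral_const_mul' _ _ ENNReal.ofReal_ne_top, ENNReal.toReal_mul,
    ENNReal.toReal_ofReal (by positivity)]

/-! ### Equidistribution on the circle -/

lemma measurePreserving_coe_haarAddCircle :
    MeasurePreserving ((↑) : ℝ → UnitAddCircle) (volume.restrict (Set.Ioc 0 1))
      AddCircle.haarAddCircle := by
  simpa [AddCircle.volume_eq_smul_haarAddCircle] using UnitAddCircle.measurePreserving_mk 0

lemma setIntegral_Ioc_comp_coe {E : Type*} [NormedAddCommGroup E] [NormedSpace ℝ E]
    (f : UnitAddCircle → E) :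
    ∫ t in Set.Ioc (0 : ℝ) 1, f (t : UnitAddCircle) = ∫ z, f z ∂AddCircle.haarAddCircle := by
  simpa [AddCircle.volume_eq_smul_haarAddCircle] using UnitAddCircle.integral_preimage 0 f

section Lp

variable {s : Set ℝ} (hs : s ⊆ Set.Ioc 0 1)
include hs

lemma integrableOn_comp_coe (F : Lp ℂ 1 (AddCircle.haarAddCircle (T := 1))) :
    IntegrableOn (fun t : ℝ ↦ F (t : UnitAddCircle)) s :=
  IntegrableOn.mono_set
    (measurePreserving_coe_haarAddCircle.integrable_comp_of_integrable (L1.integrable_coeFn F)) hs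

lemma setIntegral_comp_coe_congr {F G : UnitAddCircle → ℂ}
    (h : F =ᵐ[AddCircle.haarAddCircle] G) :
    ∫ t in s, F (t : UnitAddCircle) = ∫ t in s, G (t : UnitAddCircle) :=
  integral_congr_ae <| ae_restrict_of_ae_restrict_of_subset hs <|
    measurePreserving_coe_haarAddCircle.quasiMeasurePreserving.ae_eq_comp h

lemma dist_setIntegral_comp_coe_le (F G : Lp ℂ 1 (AddCircle.haarAddCircle (T := 1))) :
    dist (∫ t in s, F (t : UnitAddCircle)) (∫ t in s, G (t : UnitAddCircle)) ≤ dist F G := by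
  have hFG : IntegrableOn (fun t : ℝ ↦ ‖F (t : UnitAddCircle) - G (t : UnitAddCircle)‖)
      (Set.Ioc 0 1) :=
    ((integrableOn_comp_coe subset_rfl F).sub (integrableOn_comp_coe subset_rfl G)).norm
  calc dist (∫ t in s, F (t : UnitAddCircle)) (∫ t in s, G (t : UnitAddCircle))
      = ‖∫ t in s, (F (t : UnitAddCircle) - G (t : UnitAddCircle))‖ := by
        rw [dist_eq_norm, integral_sub (integrableOn_comp_coe hs F) (integrableOn_comp_coe hs G)]
    _ ≤ ∫ t in s, ‖F (t : UnitAddCircle) - G (t : UnitAddCircle)‖ :=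
        norm_integral_le_integral_norm _
    _ ≤ ∫ t in Set.Ioc (0 : ℝ) 1, ‖F (t : UnitAddCircle) - G (t : UnitAddCircle)‖ :=
        setIntegral_mono_set hFG (ae_of_all _ fun _ ↦ norm_nonneg _) (Eventually.of_forall hs)
    _ = ∫ z, ‖F z - G z‖ ∂AddCircle.haarAddCircle :=
        setIntegral_Ioc_comp_coe fun z ↦ ‖F z - G z‖
    _ = dist F G := by
        rw [L1.dist_eq_integral_dist]
        simp only [dist_eq_norm]

end Lp

section Equidistribution

variable {ι : Type*} {l : Filter ι} {A : ι → Set ℝ} {P : ℝ} (hA : ∀ i, A i ⊆ Set.Ioc 0 1)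
  (hP : ∀ k : ℤ, Tendsto (fun i ↦ ∫ t in A i, fourier k (t : UnitAddCircle)) l
    (𝓝 (P * ∫ t in Set.Ioc (0 : ℝ) 1, fourier k (t : UnitAddCircle))))
include hA hP

lemma tendsto_setIntegral_of_mem_span_fourierLp {F : Lp ℂ 1 (AddCircle.haarAddCircle (T := 1))}
    (hF : F ∈ Submodule.span ℂ (Set.range (fourierLp (T := 1) 1))) :
    Tendsto (fun i ↦ ∫ t in A i, F (t : UnitAddCircle)) l
      (𝓝 (P * ∫ t in Set.Ioc (0 : ℝ) 1, F (t : UnitAddCircle))) := by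
  induction hF using Submodule.span_induction with
  | mem F hF =>
    obtain ⟨k, rfl⟩ := hF
    simpa only [fun i ↦ setIntegral_comp_coe_congr (hA i) (coeFn_fourierLp 1 k),
      setIntegral_comp_coe_congr subset_rfl (coeFn_fourierLp 1 k)] using hP k
  | zero =>
    have integral_zero_eq {s : Set ℝ} (hs : s ⊆ Set.Ioc 0 1) :
        ∫ t in s, (0 : Lp ℂ 1 (AddCircle.haarAddCircle (T := 1))) (t : UnitAddCircle) = 0 := by
      rw [setIntegral_comp_coe_congr hs (Lp.coeFn_zero ℂ 1 _)]
      exact integral_zero ℝ ℂ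
    simp only [fun i ↦ integral_zero_eq (hA i), integral_zero_eq subset_rfl, mul_zero,
      tendsto_const_nhds]
  | add F G _ _ ihF ihG =>
    have integral_add_eq {s : Set ℝ} (hs : s ⊆ Set.Ioc 0 1) :
        ∫ t in s, (F + G) (t : UnitAddCircle) =
          (∫ t in s, F (t : UnitAddCircle)) + ∫ t in s, G (t : UnitAddCircle) := by
      rw [setIntegral_comp_coe_congr hs (Lp.coeFn_add F G)]
      exact integral_add (integrableOn_comp_coe hs F) (integrableOn_comp_coe hs G)
    simpa only [fun i ↦ integral_add_eq (hA i), integral_add_eq subset_rfl, mul_add]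
      using ihF.add ihG
  | smul c F _ ihF =>
    have integral_smul_eq {s : Set ℝ} (hs : s ⊆ Set.Ioc 0 1) :
        ∫ t in s, (c • F) (t : UnitAddCircle) = c * ∫ t in s, F (t : UnitAddCircle) := by
      rw [setIntegral_comp_coe_congr hs (Lp.coeFn_smul c F)]
      exact integral_const_mul c _
    simpa only [fun i ↦ integral_smul_eq (hA i), integral_smul_eq subset_rfl, mul_left_comm _ c]
      using ihF.const_mul c

lemma tendsto_setIntegral_of_tendsto_setIntegral_fourier
    (F : Lp ℂ 1 (AddCircle.haarAddCircle (T := 1))) :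
    Tendsto (fun i ↦ ∫ t in A i, F (t : UnitAddCircle)) l
      (𝓝 (P * ∫ t in Set.Ioc (0 : ℝ) 1, F (t : UnitAddCircle))) := by
  have equicont : UniformEquicontinuous
      fun i (F : Lp ℂ 1 (AddCircle.haarAddCircle (T := 1))) ↦ ∫ t in A i, F (t : UnitAddCircle) :=
    Metric.uniformEquicontinuous_of_continuity_modulus id tendsto_id _
      fun F G i ↦ dist_setIntegral_comp_coe_le (hA i) F G
  have lipschitz : LipschitzWith 1 fun F : Lp ℂ 1 (AddCircle.haarAddCircle (T := 1)) ↦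
      ∫ t in Set.Ioc (0 : ℝ) 1, F (t : UnitAddCircle) :=
    LipschitzWith.mk_one (dist_setIntegral_comp_coe_le subset_rfl)
  have hF : F ∈ closure (Submodule.span ℂ (Set.range (fourierLp (T := 1) 1)) : Set _) := by
    rw [← Submodule.topologicalClosure_coe, span_fourierLp_closure_eq_top ENNReal.one_ne_top]
    exact Set.mem_univ F
  exact (equicont.equicontinuous F).tendsto_of_mem_closure
    (lipschitz.continuous.const_mul (P : ℂ)).continuousAt.continuousWithinAt
    (fun G hG ↦ tendsto_setIntegral_of_mem_span_fourierLp hA hP hG) hF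

lemma tendsto_measureReal_inter_of_tendsto_setIntegral_fourier {D : Set ℝ}
    (hD : MeasurableSet D) :
    Tendsto (fun i ↦ volume.real (A i ∩ D)) l (𝓝 (P * volume.real (Set.Ioc 0 1 ∩ D))) := by
  set E : Set UnitAddCircle := {z | ((AddCircle.equivIoc 1 0 z : Set.Ioc (0 : ℝ) (0 + 1)) : ℝ) ∈ D}
  have measurable_E : MeasurableSet E :=
    (measurable_subtype_coe.comp (AddCircle.measurableEquivIoc 1 0).measurable) hD
  have mem_E {t : ℝ} (ht : t ∈ Set.Ioc (0 : ℝ) 1) : (t : UnitAddCircle) ∈ E ↔ t ∈ D :=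
    iff_of_eq (AddCircle.liftIoc_coe_apply (p := (1 : ℝ)) (a := 0) (f := D) (by simpa using ht))
  set F := indicatorConstLp 1 measurable_E (measure_ne_top AddCircle.haarAddCircle E) (1 : ℂ)
  have integral_F {s : Set ℝ} (hs : s ⊆ Set.Ioc 0 1) :
      ∫ t in s, F (t : UnitAddCircle) = volume.real (s ∩ D) := by
    have indicator_eq : ∀ᵐ t : ℝ ∂volume.restrict (Set.Ioc 0 1),
        E.indicator (fun _ ↦ (1 : ℂ)) (t : UnitAddCircle) = D.indicator (fun _ ↦ 1) t :=
      ae_restrict_of_forall_mem measurableSet_Ioc fun t ht ↦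
        Set.indicator_eq_indicator (mem_E ht) rfl
    rw [setIntegral_comp_coe_congr hs indicatorConstLp_coeFn]
    calc ∫ t in s, E.indicator (fun _ ↦ (1 : ℂ)) (t : UnitAddCircle)
        = ∫ t in s, D.indicator (fun _ ↦ (1 : ℂ)) t :=
          integral_congr_ae (ae_restrict_of_ae_restrict_of_subset hs indicator_eq)
      _ = volume.real (s ∩ D) := by
        simp [setIntegral_indicator hD]
  have key := tendsto_setIntegral_of_tendsto_setIntegral_fourier hA hP F
  rw [integral_F subset_rfl, funext fun i ↦ integral_F (hA i), ← Complex.ofReal_mul] at key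
  exact (Complex.continuous_re.tendsto _).comp key

end Equidistribution

/-! ### Smallest denominators -/

lemma tendsto_rpow_neg_mul_sq_two_add_log_atTop {r : ℝ} (hr : 0 < r) :
    Tendsto (fun x : ℝ ↦ x ^ (-r) * (2 + Real.log x) ^ 2) atTop (𝓝 0) := by
  have half_pos : 0 < r / 2 := by positivity
  have rpow_tendsto : Tendsto (fun x : ℝ ↦ x ^ (-(r / 2))) atTop (𝓝 0) :=
    tendsto_rpow_neg_atTop half_pos
  have log_tendsto : Tendsto (fun x : ℝ ↦ Real.log x / x ^ (r / 2)) atTop (𝓝 0) :=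
    (isLittleO_log_rpow_atTop half_pos).tendsto_div_nhds_zero
  have sq_tendsto := ((rpow_tendsto.const_mul 2).add log_tendsto).pow 2
  rw [mul_zero, add_zero, zero_pow two_ne_zero] at sq_tendsto
  refine sq_tendsto.congr' ?_
  filter_upwards [eventually_gt_atTop 0] with x hx
  have : x ^ (-r) = (x ^ (-(r / 2))) ^ 2 := by
    rw [← Real.rpow_mul_natCast hx.le]
    congr 1
    push_cast
    ring
  rw [this, div_eq_mul_inv (Real.log x), ← Real.rpow_neg hx.le]
  ring

lemma tendsto_setIntegral_fourier_farFromFractions_of_ne_zero {c : ℝ} (hc : 0 < c) {k : ℤ}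
    (hk : k ≠ 0) :
    Tendsto (fun T : ℝ ↦ ∫ t in Set.Ioc 0 1 ∩ farFromFractions ⌊T⌋₊ (c / T ^ 2),
      fourier k (t : UnitAddCircle)) atTop (𝓝 0) := by
  obtain ⟨C, sum_le⟩ := exists_norm_sum_gapWeight_smul_fourier_le hk
  have bound_tendsto : Tendsto (fun x : ℝ ↦ 2 * Real.pi * |(k : ℝ)| / x +
      C * (x ^ (-(1 / 24) : ℝ) * (2 + Real.log x) ^ 2)) atTop (𝓝 0) := by
    simpa using (tendsto_const_nhds.div_atTop tendsto_id).add
      ((tendsto_rpow_neg_mul_sq_two_add_log_atTop (r := 1 / 24) (by norm_num)).const_mul C)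
  refine squeeze_zero_norm' ?_
    ((bound_tendsto.comp tendsto_natCast_atTop_atTop).comp tendsto_nat_floor_atTop)
  filter_upwards [eventually_ge_atTop 1] with T hT
  have one_le_floor : 1 ≤ ⌊T⌋₊ := Nat.floor_pos.2 hT
  have δ_pos : 0 < c / T ^ 2 := by positivity
  exact (norm_le_norm_sub_add _ _).trans <| add_le_add
    (norm_setIntegral_fourier_sub_sum_le k one_le_floor δ_pos)
    (sum_le ⌊T⌋₊ _ one_le_floor δ_pos.le)

lemma tendsto_setIntegral_fourier_farFromFractions {c : ℝ} (hc : 0 < c) (k : ℤ) :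
    Tendsto (fun T : ℝ ↦ ∫ t in Set.Ioc 0 1 ∩ farFromFractions ⌊T⌋₊ (c / T ^ 2),
      fourier k (t : UnitAddCircle)) atTop
      (𝓝 ((6 / Real.pi ^ 2 * ∫ z, gapKernel c z : ℝ) *
        ∫ t in Set.Ioc (0 : ℝ) 1, fourier k (t : UnitAddCircle))) := by
  rcases eq_or_ne k 0 with rfl | hk
  · have measure_tendsto : Tendsto
        (fun T : ℝ ↦ volume.real (Set.Ioc 0 1 ∩ farFromFractions ⌊T⌋₊ (c / T ^ 2))) atTop
        (𝓝 (6 / Real.pi ^ 2 * ∫ z, gapKernel c z)) := by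
      refine (tendsto_sum_gapWeight hc.le).congr' ?_
      filter_upwards [eventually_ge_atTop 1] with T hT
      exact sum_gapWeight (Nat.floor_pos.2 hT) (by positivity)
    simpa [Function.comp_def] using (Complex.continuous_ofReal.tendsto _).comp measure_tendsto
  · have integral_fourier : ∫ z, fourier k z ∂AddCircle.haarAddCircle (T := 1) = 0 :=
      integral_eq_zero_of_add_right_eq_neg (fourier_add_half_inv_index hk one_pos)
    rw [setIntegral_Ioc_comp_coe, integral_fourier, mul_zero]
    exact tendsto_setIntegral_fourier_farFromFractions_of_ne_zero hc hk

lemma tendsto_measureReal_farFromFractions_inter {c : ℝ} (hc : 0 < c) {D : Set ℝ}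
    (hD : MeasurableSet D) :
    Tendsto (fun T : ℝ ↦ volume.real (Set.Ioc 0 1 ∩ farFromFractions ⌊T⌋₊ (c / T ^ 2) ∩ D)) atTop
      (𝓝 ((6 / Real.pi ^ 2 * ∫ z, gapKernel c z) * volume.real (Set.Ioc 0 1 ∩ D))) :=
  tendsto_measureReal_inter_of_tendsto_setIntegral_fourier (fun _ ↦ Set.inter_subset_left)
    (tendsto_setIntegral_fourier_farFromFractions hc) hD

lemma lt_qmin_iff {x δ : ℝ} (hδ : 0 < δ) {N : ℕ} : N < qmin x δ ↔ x ∈ farFromFractions N δ := by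
  have mem_window_iff (q : ℕ) (p : ℤ) :
      (x - δ / 2 < (p : ℝ) / q ∧ (p : ℝ) / q < x + δ / 2) ↔ |x - p / q| < δ / 2 := by
    rw [abs_sub_lt_iff]
    constructor <;> rintro ⟨_, _⟩ <;> constructor <;> linarith
  have nonempty : {q : ℕ | 0 < q ∧ ∃ p : ℤ, x - δ / 2 < (p : ℝ) / q ∧
      (p : ℝ) / q < x + δ / 2}.Nonempty := by
    obtain ⟨r, hr⟩ := exists_rat_btwn (show x - δ / 2 < x + δ / 2 by linarith)
    exact ⟨r.den, r.den_pos, r.num, by rwa [← Rat.cast_def]⟩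
  constructor
  · intro h q q_pos q_le p
    by_contra! close
    have qmin_le : qmin x δ ≤ q := Nat.sInf_le ⟨q_pos, p, (mem_window_iff q p).2 close⟩
    exact h.not_ge (qmin_le.trans q_le)
  · intro h
    obtain ⟨q_pos, p, hp⟩ := Nat.sInf_mem nonempty
    by_contra! q_le
    exact ((mem_window_iff _ p).1 hp).not_ge (h _ q_pos q_le p)

lemma lt_log_qmin_iff {x δ : ℝ} (hδ : 0 < δ) {L : ℝ} :
    L - 1 / 2 * Real.log δ < Real.log (qmin x δ) ↔
      x ∈ farFromFractions ⌊Real.exp L / √δ⌋₊ δ := by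
  have qmin_pos : (0 : ℝ) < qmin x δ := by
    exact_mod_cast (lt_qmin_iff hδ).2 fun q q_pos q_le ↦ absurd q_le q_pos.not_ge
  have log_eq : Real.log (Real.exp L / √δ) = L - 1 / 2 * Real.log δ := by
    rw [Real.log_div (Real.exp_ne_zero L) (Real.sqrt_ne_zero'.2 hδ), Real.log_exp,
      Real.log_sqrt hδ.le]
    ring
  rw [← lt_qmin_iff hδ, Nat.floor_lt (by positivity), ← log_eq,
    Real.log_lt_log_iff (by positivity) qmin_pos]

lemma tendsto_exp_div_sqrt (L : ℝ) :
    Tendsto (fun δ : ℝ ↦ Real.exp L / √δ) (𝓝[>] 0) atTop := by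
  have sqrt_tendsto : Tendsto Real.sqrt (𝓝[>] 0) (𝓝[>] 0) := by
    refine tendsto_nhdsWithin_iff.2 ⟨?_, eventually_mem_nhdsWithin.mono fun _ ↦ Real.sqrt_pos.2⟩
    simpa using (Real.continuous_sqrt.tendsto 0).mono_left nhdsWithin_le_nhds
  exact (tendsto_inv_nhdsGT_zero.comp sqrt_tendsto).const_mul_atTop (Real.exp_pos L)

lemma exp_two_mul_div_sq {δ : ℝ} (hδ : 0 < δ) (L : ℝ) :
    Real.exp (2 * L) / (Real.exp L / √δ) ^ 2 = δ := by
  rw [div_pow, Real.sq_sqrt hδ.le, ← Real.exp_nat_mul, Nat.cast_ofNat,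
    div_div_cancel₀ (Real.exp_ne_zero _)]

lemma ae_eq_Ioc_inter {D : Set ℝ} (hD : D ⊆ Set.Icc 0 1) :
    D =ᵐ[volume] (Set.Ioc 0 1 ∩ D : Set ℝ) := by
  have := (Ioc_ae_eq_Icc (μ := volume) (a := (0 : ℝ)) (b := 1)).inter (ae_eq_refl D)
  rw [Set.inter_eq_right.2 hD] at this
  exact this.symm

end SmallestDenominator

open SmallestDenominator in
theorem smallest_denominator_log_limit_law_general
    (D : Set ℝ) (hD : D ⊆ Set.Icc 0 1) (hDm : MeasurableSet D) (L : ℝ) :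
    Tendsto (fun δ : ℝ =>
        (volume {x ∈ D | L - (1 / 2) * Real.log δ < Real.log (qmin x δ)}).toReal)
      (nhdsWithin 0 (Set.Ioi 0))
      (nhds ((volume D).toReal * ∫ s in Set.Ioi L, etaLog s)) := by
  have limit := (tendsto_measureReal_farFromFractions_inter (Real.exp_pos (2 * L)) hDm).comp
    (tendsto_exp_div_sqrt L)
  rw [integral_gapKernel_eq_integral_etaLog, ← measureReal_congr (ae_eq_Ioc_inter hD),
    mul_comm _ (volume.real D)] at limit
  refine limit.congr' ?_
  filter_upwards [self_mem_nhdsWithin] with δ hδ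
  have far_eq : {x ∈ D | L - (1 / 2) * Real.log δ < Real.log (qmin x δ)} =
      farFromFractions ⌊Real.exp L / √δ⌋₊ δ ∩ D := by
    ext x
    rw [Set.inter_comm]
    exact and_congr_right fun _ ↦ lt_log_qmin_iff hδ
  simp only [Function.comp_apply, exp_two_mul_div_sq hδ L]
  rw [far_eq, ← measureReal_def, Set.inter_assoc]
  exact (measureReal_congr (ae_eq_Ioc_inter (Set.inter_subset_right.trans hD))).symm

theorem smallest_denominator_log_limit_law
    (D : Set ℝ) (hD : D ⊆ Set.Icc 0 1) (hDI : D.OrdConnected) (L : ℝ) :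
    Tendsto (fun δ : ℝ =>
        (volume {x ∈ D | L - (1 / 2) * Real.log δ < Real.log (qmin x δ)}).toReal)
      (nhdsWithin 0 (Set.Ioi 0))
      (nhds ((volume D).toReal * ∫ s in Set.Ioi L, etaLog s)) :=
  smallest_denominator_log_limit_law_general D hD hDI.measurableSet L
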